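/- arXiv:2010.08994 — 2 statements merged into one kernel-verified Lean document; each statement's English description precedes it below -/
import Mathlib

section
/- There is an absolute constant C > 0 such that the following holds. Let f : {0,1}^n → {0,1} be a boolean function with sparsity spar(f) = r ≥ 2. Then the set system mon(f) of non-constant monomials of f has a hitting set H ⊆ [n] of size |H| ≤ C·(log₂ r)^5. -/
/-- The coefficient of the monomial `s` in the unique multilinear polynomial computing
`f : {0,1}^n → ℝ` (subsets of `Fin n` identified with points of the cube),
given by Möbius inversion. -/
noncomputable def coeff {n : ℕ} (f : Finset (Fin n) → ℝ) (s : Finset (Fin n)) : ℝ :=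
  ∑ t ∈ s.powerset, (-1 : ℝ) ^ (s.card - t.card) * f t

/-- The sparsity of `f`: the number of nonzero coefficients. -/
noncomputable def sparsity {n : ℕ} (f : Finset (Fin n) → ℝ) : ℕ :=
  {s : Finset (Fin n) | coeff f s ≠ 0}.ncard

/-- The set system of non-constant monomials of `f`. -/
def mon {n : ℕ} (f : Finset (Fin n) → ℝ) : Set (Finset (Fin n)) :=
  {s | coeff f s ≠ 0 ∧ s ≠ ∅}

/-!
Restricting `f` to pairwise disjoint blocks that are sensitive at a point `z` turns the blocks into
variables and does not increase the sparsity. A random two-colouring of these variables splits every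
monomial of degree above `log r`, so on either colour class the restriction has degree `O(log r)`,
and Markov's inequality for its average over random subsets of density `q` leaves `O(log² r)`
sensitive variables. Hence the monotone block sensitivity `b` of `f` is `O(log² r)`.

Next suppose that random sensitive blocks at `z` contain each fixed element with probability at most
`t`, where `t ≪ 1 / b²`. Among `2 b + 1` independent samples, the set of elements covered twice
contains each fixed element with probability at most `t / 16`. If it is seldom sensitive, at `z` or
at `z` joined with a sample, then adding it to `z` makes most of the samples disjoint and still
sensitive, contradicting the bound `b`; otherwise, conditioned on being sensitive, it is a random
sensitive block with `t` replaced by `t / 2`. Since `t` cannot be halved forever, every family of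
sets sensitive at `∅` has an element that lies in a fraction `Ω(1 / b²)` of them, and the greedy
choice of such elements hits the family. Every non-constant monomial contains a minimal one, which
is sensitive at `∅`.
-/

open Finset Polynomial

universe u

section MarkovInequality

theorem derivative_eval_one_le_sq {P : ℝ[X]} {d : ℕ} (hdeg : P.natDegree ≤ d)
    (hP : ∀ x ∈ Set.Icc (-1 : ℝ) 1, |P.eval x| ≤ 1) : P.derivative.eval 1 ≤ (d : ℝ) ^ 2 := by
  simpa [Chebyshev.derivative_T_eval_one] using
    Chebyshev.eval_iterate_derivative_le_of_forall_abs_le_one (k := 1) le_rfl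
      (natDegree_le_iff_degree_le.1 hdeg) hP

theorem abs_derivative_eval_zero_le_sq {p : ℝ[X]} {d : ℕ} (hdeg : p.natDegree ≤ d)
    (hp : ∀ x ∈ Set.Icc (0 : ℝ) 1, p.eval x ∈ Set.Icc (0 : ℝ) 1) :
    |p.derivative.eval 0| ≤ (d : ℝ) ^ 2 := by
  let P : ℝ[X] := C 2 * p.comp (C (1 / 2) * (1 - X)) - C 1
  have hP_eval (x : ℝ) : P.eval x = 2 * p.eval (1 / 2 * (1 - x)) - 1 := by simp [P]
  have hP_derivative : P.derivative.eval 1 = -p.derivative.eval 0 := by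
    simp [P, derivative_comp]
  have hP_natDegree : P.natDegree ≤ d := by
    have inner_natDegree : (C (1 / 2) * (1 - X) : ℝ[X]).natDegree ≤ 1 := by compute_degree
    calc P.natDegree ≤ (p.comp (C (1 / 2) * (1 - X))).natDegree := by
          rw [natDegree_sub_C]
          exact natDegree_C_mul_le _ _
      _ ≤ p.natDegree * 1 := natDegree_comp_le.trans (Nat.mul_le_mul_left _ inner_natDegree)
      _ ≤ d := by rwa [mul_one]
  have hP_abs : ∀ x ∈ Set.Icc (-1 : ℝ) 1, |P.eval x| ≤ 1 := by
    rintro x ⟨hx, hx'⟩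
    obtain ⟨h₀, h₁⟩ := hp (1 / 2 * (1 - x)) ⟨by linarith, by linarith⟩
    rw [hP_eval, abs_le]
    constructor <;> linarith
  have upper := derivative_eval_one_le_sq hP_natDegree hP_abs
  have lower := derivative_eval_one_le_sq (P := -P) (d := d) (by rwa [natDegree_neg])
    (by simpa only [eval_neg, abs_neg] using hP_abs)
  rw [derivative_neg, eval_neg] at lower
  rw [hP_derivative] at upper lower
  exact abs_le.2 ⟨by linarith, by linarith⟩

end MarkovInequality

section MultilinearExpansion

variable {κ : Type*}

/-- `c` is the family of coefficients of the multilinear polynomial computing `f`, a subset of the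
variables being identified with its indicator vector. -/
def IsMultilinearExpansion (c f : Finset κ → ℝ) : Prop :=
  ∀ x, f x = ∑ s ∈ x.powerset, c s

theorem sum_Icc_eq_sum_powerset_sdiff [DecidableEq κ] {M : Type*} [AddCommMonoid M]
    {s t : Finset κ} (hst : s ⊆ t) (F : Finset κ → M) :
    ∑ y ∈ Icc s t, F y = ∑ u ∈ (t \ s).powerset, F (s ∪ u) := by
  rw [Icc_eq_image_powerset hst, sum_image]
  intro u hu v hv huv
  have disjoint_s {w : Finset κ} (hw : w ∈ (t \ s).powerset) : Disjoint s w :=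
    disjoint_sdiff.mono_right (mem_powerset.1 hw)
  rw [← union_sdiff_cancel_left (disjoint_s hu), ← union_sdiff_cancel_left (disjoint_s hv)]
  exact congrArg (· \ s) huv

theorem sum_Icc_neg_one_pow [DecidableEq κ] {R : Type*} [Ring R] {s t : Finset κ}
    (hst : s ⊆ t) :
    ∑ y ∈ Icc s t, (-1 : R) ^ (#y - #s) = if s = t then 1 else 0 := by
  have card_diff : ∀ u ∈ (t \ s).powerset, (-1 : R) ^ (#(s ∪ u) - #s) = (-1) ^ #u := fun u hu ↦ by
    rw [card_union_of_disjoint (disjoint_sdiff.mono_right (mem_powerset.1 hu)),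
      Nat.add_sub_cancel_left]
  have sdiff_eq : t \ s = ∅ ↔ s = t :=
    sdiff_eq_empty_iff_subset.trans ⟨hst.antisymm, fun h ↦ h.ge⟩
  rw [sum_Icc_eq_sum_powerset_sdiff hst, sum_congr rfl card_diff]
  simpa [sdiff_eq] using congrArg (Int.cast : ℤ → R) (sum_powerset_neg_one_pow_card (x := t \ s))

theorem sum_Icc_pow_mul_one_sub_pow [DecidableEq κ] {R : Type*} [CommRing R] {s t : Finset κ}
    (hst : s ⊆ t) (q : R) :
    ∑ y ∈ Icc s t, q ^ #y * (1 - q) ^ (#t - #y) = q ^ #s := by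
  have split_pow : ∀ u ∈ (t \ s).powerset, q ^ #(s ∪ u) * (1 - q) ^ (#t - #(s ∪ u)) =
      q ^ #s * (q ^ #u * (1 - q) ^ (#(t \ s) - #u)) := fun u hu ↦ by
    rw [card_union_of_disjoint (disjoint_sdiff.mono_right (mem_powerset.1 hu)),
      card_sdiff_of_subset hst, pow_add, mul_assoc, Nat.sub_sub]
  rw [sum_Icc_eq_sum_powerset_sdiff hst, sum_congr rfl split_pow, ← mul_sum,
    sum_pow_mul_eq_add_pow, add_sub_cancel, one_pow, mul_one]

theorem isMultilinearExpansion_coeff {n : ℕ} (f : Finset (Fin n) → ℝ) :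
    IsMultilinearExpansion (coeff f) f := by
  intro x
  calc f x = ∑ t ∈ x.powerset, if t = x then f t else 0 := by simp
    _ = ∑ t ∈ x.powerset, ∑ s ∈ Icc t x, (-1 : ℝ) ^ (#s - #t) * f t := by
      refine sum_congr rfl fun t ht ↦ ?_
      rw [← sum_mul, sum_Icc_neg_one_pow (mem_powerset.1 ht), ite_mul, one_mul, zero_mul]
    _ = ∑ s ∈ x.powerset, coeff f s :=
      sum_comm' fun t s ↦ by
        simp only [mem_powerset, mem_Icc]
        exact ⟨fun h ↦ h.2, fun h ↦ ⟨h.1.trans h.2, h⟩⟩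

/-- The univariate polynomial obtained from the multilinear polynomial with coefficients `c` by
setting the variables in `A` to `X` and the others to `0`. -/
noncomputable def diagonalPolynomial (c : Finset κ → ℝ) (A : Finset κ) : ℝ[X] :=
  ∑ s ∈ A.powerset, C (c s) * X ^ #s

variable {c f : Finset κ → ℝ} {A : Finset κ}

-- The right-hand side is the mean of `f` over the random subset of `A` with density `q`.
theorem eval_diagonalPolynomial (hc : IsMultilinearExpansion c f) (A : Finset κ) (q : ℝ) :
    (diagonalPolynomial c A).eval q =
      ∑ y ∈ A.powerset, q ^ #y * (1 - q) ^ (#A - #y) * f y := by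
  classical
  calc (diagonalPolynomial c A).eval q = ∑ s ∈ A.powerset, q ^ #s * c s := by
        simp [diagonalPolynomial, eval_finsetSum, mul_comm (q ^ _)]
    _ = ∑ s ∈ A.powerset, ∑ y ∈ Icc s A, q ^ #y * (1 - q) ^ (#A - #y) * c s :=
      sum_congr rfl fun s hs ↦ by
        rw [← sum_mul, sum_Icc_pow_mul_one_sub_pow (mem_powerset.1 hs)]
    _ = ∑ y ∈ A.powerset, ∑ s ∈ y.powerset, q ^ #y * (1 - q) ^ (#A - #y) * c s :=
      sum_comm' fun s y ↦ by
        simp only [mem_powerset, mem_Icc]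
        exact ⟨fun h ↦ h.2, fun h ↦ ⟨h.1.trans h.2, h⟩⟩
    _ = _ := sum_congr rfl fun y _ ↦ by rw [← mul_sum, ← hc y]

theorem eval_diagonalPolynomial_mem_Icc (hc : IsMultilinearExpansion c f)
    (hf : ∀ x, f x ∈ Set.Icc (0 : ℝ) 1) {q : ℝ} (hq : q ∈ Set.Icc (0 : ℝ) 1) :
    (diagonalPolynomial c A).eval q ∈ Set.Icc (0 : ℝ) 1 := by
  have weight_nonneg (y : Finset κ) : 0 ≤ q ^ #y * (1 - q) ^ (#A - #y) :=
    mul_nonneg (pow_nonneg hq.1 _) (pow_nonneg (sub_nonneg.2 hq.2) _)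
  rw [eval_diagonalPolynomial hc]
  refine ⟨sum_nonneg fun y _ ↦ mul_nonneg (weight_nonneg y) (hf y).1, ?_⟩
  calc ∑ y ∈ A.powerset, q ^ #y * (1 - q) ^ (#A - #y) * f y
      ≤ ∑ y ∈ A.powerset, q ^ #y * (1 - q) ^ (#A - #y) :=
        sum_le_sum fun y _ ↦ mul_le_of_le_one_right (weight_nonneg y) (hf y).2
    _ = 1 := by rw [sum_pow_mul_eq_add_pow, add_sub_cancel, one_pow]

theorem derivative_diagonalPolynomial_eval_zero (hc : IsMultilinearExpansion c f)
    (A : Finset κ) :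
    (diagonalPolynomial c A).derivative.eval 0 = ∑ i ∈ A, (f {i} - f ∅) := by
  have coeff_singleton (i : κ) : f {i} - f ∅ = c {i} := by
    classical
    rw [hc {i}, hc ∅, ← insert_empty_eq i, sum_powerset_insert (notMem_empty i), powerset_empty,
      sum_singleton, sum_singleton, add_sub_cancel_left]
  calc (diagonalPolynomial c A).derivative.eval 0
      = ∑ s ∈ A.powerset, if #s = 1 then c s else 0 := by
        rw [← coeff_zero_eq_eval_zero, coeff_derivative]
        simp [diagonalPolynomial, coeff_X_pow, eq_comm]
    _ = ∑ s ∈ powersetCard 1 A, c s := by rw [← sum_filter, powersetCard_eq_filter]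
    _ = ∑ i ∈ A, (f {i} - f ∅) := by simp [powersetCard_one, coeff_singleton]

theorem natDegree_diagonalPolynomial_le {d : ℕ} (hd : ∀ s ⊆ A, c s ≠ 0 → #s ≤ d) :
    (diagonalPolynomial c A).natDegree ≤ d := by
  refine natDegree_sum_le_of_forall_le _ _ fun s hs ↦ ?_
  by_cases hcs : c s = 0
  · simp [hcs]
  · exact (natDegree_C_mul_X_pow_le _ _).trans (hd s (mem_powerset.1 hs) hcs)

theorem card_le_sq_of_forall_singleton_ne (hc : IsMultilinearExpansion c f)
    (hf : ∀ x, f x = 0 ∨ f x = 1) {d : ℕ} (hd : ∀ s ⊆ A, c s ≠ 0 → #s ≤ d)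
    (hA : ∀ i ∈ A, f {i} ≠ f ∅) : #A ≤ d ^ 2 := by
  have hf_mem (x : Finset κ) : f x ∈ Set.Icc (0 : ℝ) 1 := by
    rcases hf x with h | h <;> simp [h]
  have jump_eq : ∀ i ∈ A, f {i} - f ∅ = 1 - 2 * f ∅ := fun i hi ↦ by
    have := hA i hi
    rcases hf {i} with h | h <;> rcases hf ∅ with h' | h' <;> grind
  have abs_jump : |1 - 2 * f ∅| = 1 := by
    rcases hf ∅ with h | h <;> norm_num [h]
  have markov := abs_derivative_eval_zero_le_sq (natDegree_diagonalPolynomial_le hd)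
    fun q ↦ eval_diagonalPolynomial_mem_Icc hc hf_mem
  rw [derivative_diagonalPolynomial_eval_zero hc, sum_congr rfl jump_eq, sum_const, nsmul_eq_mul,
    abs_mul, abs_jump, mul_one, Nat.abs_cast] at markov
  exact_mod_cast markov

end MultilinearExpansion

section TwoColouring

variable {κ : Type*} [Fintype κ] [DecidableEq κ]

theorem card_filter_superset (s : Finset κ) :
    #{A : Finset κ | s ⊆ A} = 2 ^ (Fintype.card κ - #s) := by
  rw [← card_univ, ← card_Icc_finset (subset_univ s)]
  congr 1
  ext A
  simp

theorem card_filter_subset_compl (s : Finset κ) :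
    #{A : Finset κ | s ⊆ Aᶜ} = 2 ^ (Fintype.card κ - #s) := by
  rw [← card_filter_superset s]
  exact card_equiv (compl_involutive.toPerm compl) (by simp)

-- A uniformly random two-colouring leaves each edge monochromatic with
-- probability at most `2 ^ (-d)`.
theorem exists_forall_not_subset_and_not_subset_compl {F : Finset (Finset κ)} {d : ℕ}
    (hd : ∀ s ∈ F, d < #s) (hF : #F < 2 ^ d) : ∃ A, ∀ s ∈ F, ¬s ⊆ A ∧ ¬s ⊆ Aᶜ := by
  let monochromatic (s : Finset κ) : Finset (Finset κ) :=
    ({A | s ⊆ A} : Finset (Finset κ)) ∪ ({A | s ⊆ Aᶜ} : Finset (Finset κ))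
  have card_monochromatic : ∀ s ∈ F, #(monochromatic s) * 2 ^ d ≤ 2 ^ Fintype.card κ :=
    fun s hs ↦ by
    have hsκ : #s ≤ Fintype.card κ := card_le_univ s
    calc #(monochromatic s) * 2 ^ d
        ≤ (2 ^ (Fintype.card κ - #s) + 2 ^ (Fintype.card κ - #s)) * 2 ^ d := by
          gcongr
          exact (card_union_le _ _).trans_eq
            (by rw [card_filter_superset, card_filter_subset_compl])
      _ = 2 ^ (Fintype.card κ - #s + 1 + d) := by ring
      _ ≤ 2 ^ Fintype.card κ := Nat.pow_le_pow_right two_pos (by have := hd s hs; omega)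
  have card_biUnion_lt : #(F.biUnion monochromatic) < #(univ : Finset (Finset κ)) := by
    refine lt_of_mul_lt_mul_right (a := 2 ^ d) ?_ (Nat.zero_le _)
    calc #(F.biUnion monochromatic) * 2 ^ d
        ≤ (∑ s ∈ F, #(monochromatic s)) * 2 ^ d := Nat.mul_le_mul_right _ card_biUnion_le
      _ ≤ #F * 2 ^ Fintype.card κ := by
        rw [sum_mul]
        exact sum_le_card_nsmul _ _ _ card_monochromatic
      _ < 2 ^ d * 2 ^ Fintype.card κ := Nat.mul_lt_mul_of_pos_right hF (by positivity)
      _ = #(univ : Finset (Finset κ)) * 2 ^ d := by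
        rw [card_univ, Fintype.card_finset, mul_comm]
  obtain ⟨A, -, hA⟩ := exists_mem_notMem_of_card_lt_card card_biUnion_lt
  refine ⟨A, fun s hs ↦ ?_⟩
  simpa [monochromatic, hs] using fun h ↦ hA (mem_biUnion.2 ⟨s, hs, h⟩)

end TwoColouring

section MonotoneBlockSensitivity

variable {α β ι : Type*} [DecidableEq α] [Fintype ι]

/-- The monotone block sensitivity of `f` is at most `b`: if pairwise disjoint blocks each change
the value of `f` when added to `z`, there are at most `b` of them. Blocks may overlap inside `z`,
where adding them has no effect. -/
def MonotoneBlockSensitivityLE (f : Finset α → β) (b : ℕ) : Prop :=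
  ∀ (ι : Type) [Fintype ι] (z : Finset α) (B : ι → Finset α),
    (Pairwise fun i j ↦ B i ∩ B j ⊆ z) → (∀ i, f (z ∪ B i) ≠ f z) → Fintype.card ι ≤ b

theorem card_le_two_mul_sq_of_forall_singleton_ne {c f : Finset ι → ℝ}
    (hc : IsMultilinearExpansion c f) (hf : ∀ x, f x = 0 ∨ f x = 1) {d : ℕ}
    (hsparse : #{s | c s ≠ 0} < 2 ^ d) (hsens : ∀ i, f {i} ≠ f ∅) :
    Fintype.card ι ≤ 2 * d ^ 2 := by
  classical
  obtain ⟨A, hA⟩ := exists_forall_not_subset_and_not_subset_compl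
    (F := {s | c s ≠ 0 ∧ d < #s}) (d := d) (fun s hs ↦ (mem_filter.1 hs).2.2)
    ((card_le_card (monotone_filter_right _ fun s _ hs ↦ hs.1)).trans_lt hsparse)
  have le_d {s : Finset ι} (hs : c s ≠ 0) (h : s ⊆ A ∨ s ⊆ Aᶜ) : #s ≤ d := by
    by_contra! hds
    obtain ⟨h₁, h₂⟩ := hA s (mem_filter.2 ⟨mem_univ s, hs, hds⟩)
    tauto
  have card_A := card_le_sq_of_forall_singleton_ne (A := A) hc hf
    (fun s hsA hs ↦ le_d hs (.inl hsA)) fun i _ ↦ hsens i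
  have card_compl_A := card_le_sq_of_forall_singleton_ne (A := Aᶜ) hc hf
    (fun s hsA hs ↦ le_d hs (.inr hsA)) fun i _ ↦ hsens i
  have := card_add_card_compl A
  omega

variable {z : Finset α} {B : ι → Finset α}

theorem subset_union_biUnion_iff (hB : Pairwise fun i j ↦ B i ∩ B j ⊆ z) (s : Finset α)
    (y : Finset ι) :
    s ⊆ z ∪ y.biUnion B ↔
      s ⊆ z ∪ univ.biUnion B ∧ ({i | ¬s ∩ B i ⊆ z} : Finset ι) ⊆ y := by
  constructor
  · refine fun h ↦ ⟨h.trans (union_subset_union_right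
      (biUnion_subset_biUnion_of_subset_left _ (subset_univ y))), fun i hi ↦ ?_⟩
    obtain ⟨x, hx, hxz⟩ := not_subset.1 (mem_filter.1 hi).2
    obtain ⟨hxs, hxi⟩ := mem_inter.1 hx
    obtain ⟨j, hj, hxj⟩ := mem_biUnion.1 ((mem_union.1 (h hxs)).resolve_left hxz)
    obtain rfl : i = j := by
      by_contra hij
      exact hxz (hB hij (mem_inter.2 ⟨hxi, hxj⟩))
    exact hj
  · rintro ⟨hs, hy⟩ x hxs
    refine mem_union.2 (or_iff_not_imp_left.2 fun hxz ↦ ?_)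
    obtain ⟨i, -, hxi⟩ := mem_biUnion.1 ((mem_union.1 (hs hxs)).resolve_left hxz)
    exact mem_biUnion.2 ⟨i, hy (mem_filter.2
      ⟨mem_univ i, fun h ↦ hxz (h (mem_inter.2 ⟨hxs, hxi⟩))⟩), hxi⟩

theorem exists_isMultilinearExpansion_union_biUnion [Fintype α] {c f : Finset α → ℝ}
    (hc : IsMultilinearExpansion c f) (hB : Pairwise fun i j ↦ B i ∩ B j ⊆ z) :
    ∃ c' : Finset ι → ℝ, IsMultilinearExpansion c' (fun y ↦ f (z ∪ y.biUnion B)) ∧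
      #{T | c' T ≠ 0} ≤ #{s | c s ≠ 0} := by
  classical
  let meets (s : Finset α) : Finset ι := {i | ¬s ∩ B i ⊆ z}
  let c' (T : Finset ι) : ℝ := ∑ s ∈ (z ∪ univ.biUnion B).powerset with meets s = T, c s
  refine ⟨c', fun y ↦ ?_, ?_⟩
  · refine (hc (z ∪ y.biUnion B)).trans ?_
    rw [sum_fiberwise_eq_sum_filter]
    refine sum_congr ?_ fun _ _ ↦ rfl
    ext s
    simp only [mem_powerset, mem_filter, meets, subset_union_biUnion_iff hB s y]
  · have support_subset : ({T | c' T ≠ 0} : Finset _) ⊆ image meets {s | c s ≠ 0} := fun T hT ↦ by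
      obtain ⟨s, hs, hcs⟩ := exists_ne_zero_of_sum_ne_zero (mem_filter.1 hT).2
      exact mem_image.2 ⟨s, by simpa using hcs, (mem_filter.1 hs).2⟩
    exact (card_le_card support_subset).trans card_image_le

theorem monotoneBlockSensitivityLE_of_card_lt [Fintype α] {c f : Finset α → ℝ}
    (hc : IsMultilinearExpansion c f) (hf : ∀ x, f x = 0 ∨ f x = 1) {d : ℕ}
    (hsparse : #{s | c s ≠ 0} < 2 ^ d) : MonotoneBlockSensitivityLE f (2 * d ^ 2) := by
  classical
  intro ι _ z B hB hsens
  obtain ⟨c', hc', hcard⟩ := exists_isMultilinearExpansion_union_biUnion hc hB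
  exact card_le_two_mul_sq_of_forall_singleton_ne hc' (fun _ ↦ hf _) (hcard.trans_lt hsparse)
    (by simpa using hsens)

end MonotoneBlockSensitivity

section Counting

variable {ι : Type*} [Fintype ι]

theorem card_filter_apply_and_apply_le [DecidableEq ι] {Ω : Type*} [Fintype Ω] {p : Ω → Prop}
    [DecidablePred p] {t : ℝ} (hp : (#{ω | p ω} : ℝ) ≤ t * Fintype.card Ω) {i j : ι}
    (hij : i ≠ j) :
    (#{o : ι → Ω | p (o i) ∧ p (o j)} : ℝ) ≤ t ^ 2 * Fintype.card (ι → Ω) := by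
  let allowed (k : ι) : Finset Ω := if k ∈ ({i, j} : Finset ι) then ({ω | p ω} : Finset Ω) else univ
  have eq_piFinset : ({o | p (o i) ∧ p (o j)} : Finset (ι → Ω)) = Fintype.piFinset allowed := by
    ext o
    simp only [mem_filter_univ, Fintype.mem_piFinset, allowed]
    constructor
    · rintro ⟨hi, hj⟩ k
      split_ifs with hk
      · obtain rfl | rfl : k = i ∨ k = j := by simpa using hk
        all_goals simpa
      · exact mem_univ _
    · exact fun h ↦ ⟨by simpa using h i, by simpa using h j⟩
  have card_allowed_le : ∀ k ∈ univ,
      (#(allowed k) : ℝ) ≤ (if k ∈ ({i, j} : Finset ι) then t else 1) * Fintype.card Ω := by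
    intro k _
    by_cases hk : k ∈ ({i, j} : Finset ι)
    · simpa only [allowed, if_pos hk] using hp
    · simp only [allowed, if_neg hk, one_mul, card_univ, le_refl]
  calc (#{o : ι → Ω | p (o i) ∧ p (o j)} : ℝ) = ∏ k, (#(allowed k) : ℝ) := by
        rw [eq_piFinset, Fintype.card_piFinset, Nat.cast_prod]
    _ ≤ ∏ k, (if k ∈ ({i, j} : Finset ι) then t else 1) * (Fintype.card Ω : ℝ) :=
      prod_le_prod (fun _ _ ↦ Nat.cast_nonneg _) card_allowed_le
    _ = t ^ 2 * Fintype.card (ι → Ω) := by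
      rw [prod_mul_distrib, prod_ite_mem, univ_inter, prod_const, prod_const, card_pair hij,
        card_univ, Fintype.card_fun, Nat.cast_pow]

theorem exists_not_and_four_mul_card_le {X : Type*} [Fintype X] [Nonempty X] [Nonempty ι]
    {A : X → Prop} [DecidablePred A] {E : ι → X → Prop} [∀ i, DecidablePred (E i)]
    (hA : 8 * #{x | A x} ≤ Fintype.card X) (hE : ∀ i, 8 * #{x | E i x} ≤ Fintype.card X) :
    ∃ x, ¬A x ∧ 4 * #{i | E i x} ≤ Fintype.card ι := by
  by_contra! hbad
  have card_lt (x : X) :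
      Fintype.card ι < 4 * (Fintype.card ι * (if A x then 1 else 0) + #{i | E i x}) := by
    have := Fintype.card_pos (α := ι)
    split_ifs with hAx
    · omega
    · simpa using hbad x hAx
  have sum_card_comm : ∑ x, #{i | E i x} = ∑ i, #{x | E i x} := by
    simp only [card_filter]
    exact sum_comm
  have sum_card_le : 8 * ∑ i, #{x | E i x} ≤ Fintype.card ι * Fintype.card X := by
    rw [mul_sum]
    exact sum_le_card_nsmul _ _ _ fun i _ ↦ hE i
  have average_lt : Fintype.card X * Fintype.card ι <
      4 * (Fintype.card ι * #{x | A x} + ∑ i, #{x | E i x}) := by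
    calc Fintype.card X * Fintype.card ι = ∑ _x : X, Fintype.card ι := by simp
      _ < ∑ x, 4 * (Fintype.card ι * (if A x then 1 else 0) + #{i | E i x}) :=
        sum_lt_sum_of_nonempty univ_nonempty fun x _ ↦ card_lt x
      _ = _ := by rw [← mul_sum, sum_add_distrib, ← mul_sum, ← card_filter, sum_card_comm]
  nlinarith [Nat.mul_le_mul_left (Fintype.card ι) hA]

end Counting

section Overlap

variable {α ι : Type*} [DecidableEq α] [Fintype ι]

/-- The elements lying in at least two of the blocks `B i`. -/
def overlap (B : ι → Finset α) : Finset α :=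
  open scoped Classical in univ.offDiag.biUnion fun p ↦ B p.1 ∩ B p.2

theorem mem_overlap {B : ι → Finset α} {x : α} :
    x ∈ overlap B ↔ ∃ i j, i ≠ j ∧ x ∈ B i ∧ x ∈ B j := by
  simp [overlap]

theorem union_overlap_eq_union_overlap_subtype (B : ι → Finset α) (i : ι)
    [Fintype {j // j ≠ i}] :
    B i ∪ overlap B = B i ∪ overlap fun j : {j // j ≠ i} ↦ B j := by
  ext x
  by_cases hx : x ∈ B i
  · simp [hx]
  have ne_i {j : ι} (hj : x ∈ B j) : j ≠ i := fun h ↦ hx (h ▸ hj)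
  simp only [mem_union, hx, false_or, mem_overlap]
  constructor
  · rintro ⟨j, k, hjk, hj, hk⟩
    exact ⟨⟨j, ne_i hj⟩, ⟨k, ne_i hk⟩, by simpa using hjk, hj, hk⟩
  · rintro ⟨j, k, hjk, hj, hk⟩
    exact ⟨j, k, Subtype.coe_ne_coe.2 hjk, hj, hk⟩

end Overlap

section SpreadSensitiveBlocks

variable {α : Type u} {β : Type*} [DecidableEq α]

/-- A uniformly random member of the family `B` contains each fixed element with probability at
most `t`. -/
def IsSpread {Ω : Type*} [Fintype Ω] (B : Ω → Finset α) (t : ℝ) : Prop :=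
  ∀ x, (#{ω | x ∈ B ω} : ℝ) ≤ t * Fintype.card Ω

/-- Some nonempty `t`-spread family of blocks changes the value of `f` at a common base point `z`.
For `t > 0` this expresses that the fractional monotone block sensitivity of `f` is at least
`1 / t`: give each block of the family the weight `1 / (t * card Ω)`. -/
def HasSpreadSensitiveBlocks (f : Finset α → β) (t : ℝ) : Prop :=
  ∃ (Ω : Type u) (_ : Fintype Ω) (_ : Nonempty Ω) (z : Finset α) (B : Ω → Finset α),
    IsSpread B t ∧ ∀ ω, f (z ∪ B ω) ≠ f z

theorem HasSpreadSensitiveBlocks.of_finset {f : Finset α → β} {t : ℝ} {Ω : Type u}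
    {S : Finset Ω} (hS : S.Nonempty) {z : Finset α} {B : Ω → Finset α}
    (hspread : ∀ x, (#{ω ∈ S | x ∈ B ω} : ℝ) ≤ t * #S) (hsens : ∀ ω ∈ S, f (z ∪ B ω) ≠ f z) :
    HasSpreadSensitiveBlocks f t := by
  refine ⟨S, inferInstance, hS.to_subtype, z, fun ω ↦ B ω, fun x ↦ ?_, fun ω ↦ hsens ω ω.2⟩
  rw [Fintype.card_coe, univ_eq_attach, card_filter, sum_attach S fun ω ↦ if x ∈ B ω then 1 else 0,
    ← card_filter]
  exact hspread x

variable {ι : Type} [Fintype ι] [DecidableEq ι] {Ω : Type u} [Fintype Ω]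

theorem isSpread_overlap {B : Ω → Finset α} {t : ℝ} (hB : IsSpread B t) :
    IsSpread (fun o : ι → Ω ↦ overlap (B ∘ o)) ((Fintype.card ι : ℝ) ^ 2 * t ^ 2) := by
  classical
  intro x
  let bothContain (p : ι × ι) : Finset (ι → Ω) := {o | x ∈ B (o p.1) ∧ x ∈ B (o p.2)}
  have subset_biUnion :
      ({o | x ∈ overlap (B ∘ o)} : Finset (ι → Ω)) ⊆ univ.offDiag.biUnion bothContain :=
    fun o ho ↦ by
    obtain ⟨i, j, hij, hi, hj⟩ := mem_overlap.1 (mem_filter.1 ho).2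
    exact mem_biUnion.2 ⟨(i, j), by simpa using hij, by simpa [bothContain] using ⟨hi, hj⟩⟩
  have card_bothContain_le : ∀ p ∈ (univ : Finset ι).offDiag,
      (#(bothContain p) : ℝ) ≤ t ^ 2 * Fintype.card (ι → Ω) := fun p hp ↦
    card_filter_apply_and_apply_le (p := fun ω ↦ x ∈ B ω) (hB x) (mem_offDiag.1 hp).2.2
  have card_offDiag_le : #(univ : Finset ι).offDiag ≤ Fintype.card ι ^ 2 := by
    rw [offDiag_card, card_univ, sq]
    exact Nat.sub_le _ _
  calc (#{o : ι → Ω | x ∈ overlap (B ∘ o)} : ℝ)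
      ≤ ∑ p ∈ (univ : Finset ι).offDiag, (#(bothContain p) : ℝ) := by
        exact_mod_cast (card_le_card subset_biUnion).trans card_biUnion_le
    _ ≤ #(univ : Finset ι).offDiag * (t ^ 2 * Fintype.card (ι → Ω)) := by
      simpa only [nsmul_eq_mul] using sum_le_card_nsmul _ _ _ card_bothContain_le
    _ ≤ (Fintype.card ι : ℝ) ^ 2 * (t ^ 2 * Fintype.card (ι → Ω)) := by
      gcongr
      exact_mod_cast card_offDiag_le
    _ = _ := by ring

variable {f : Finset α → β} {t : ℝ} {B : Ω → Finset α}

-- Otherwise, conditioning the overlap on being sensitive would give a `(t / 2)`-spread family.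
theorem card_filter_overlap_ne_le [DecidableEq β] (hB : IsSpread B t) (ht : 0 ≤ t)
    (hι : 16 * (Fintype.card ι : ℝ) ^ 2 * t ≤ 1) (hf : ¬HasSpreadSensitiveBlocks f (t / 2))
    (z : Finset α) :
    8 * #{o : ι → Ω | f (z ∪ overlap (B ∘ o)) ≠ f z} ≤ Fintype.card (ι → Ω) := by
  by_contra! hcard
  let S : Finset (ι → Ω) := {o | f (z ∪ overlap (B ∘ o)) ≠ f z}
  refine hf (.of_finset (S := S) (z := z) (B := fun o ↦ overlap (B ∘ o)) ?_ (fun x ↦ ?_)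
    fun o ho ↦ (mem_filter.1 ho).2)
  · exact card_pos.1 (by change _ < 8 * #S at hcard; omega)
  · have hcard' : (Fintype.card (ι → Ω) : ℝ) ≤ 8 * #S := by exact_mod_cast hcard.le
    calc (#{o ∈ S | x ∈ overlap (B ∘ o)} : ℝ) ≤ #{o : ι → Ω | x ∈ overlap (B ∘ o)} := by
          exact_mod_cast card_le_card (filter_subset_filter _ (subset_univ S))
      _ ≤ (Fintype.card ι : ℝ) ^ 2 * t ^ 2 * Fintype.card (ι → Ω) := isSpread_overlap hB x
      _ ≤ (Fintype.card ι : ℝ) ^ 2 * t ^ 2 * (8 * #S) := by gcongr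
      _ = 16 * (Fintype.card ι : ℝ) ^ 2 * t * (t / 2 * #S) := by ring
      _ ≤ t / 2 * #S := mul_le_of_le_one_left (by positivity) hι

-- Elements of `B (o i)` no longer matter, so only the overlap of the other blocks does, and that
-- is independent of `o i`.
theorem card_filter_union_overlap_ne_le [DecidableEq β] (hB : IsSpread B t) (ht : 0 ≤ t)
    (hι : 16 * (Fintype.card ι : ℝ) ^ 2 * t ≤ 1) (hf : ¬HasSpreadSensitiveBlocks f (t / 2))
    (z : Finset α) (i : ι) :
    8 * #{o : ι → Ω | f (z ∪ B (o i) ∪ overlap (B ∘ o)) ≠ f (z ∪ B (o i))} ≤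
      Fintype.card (ι → Ω) := by
  have hι' : 16 * (Fintype.card {j // j ≠ i} : ℝ) ^ 2 * t ≤ 1 := by
    refine le_trans ?_ hι
    gcongr
    exact Fintype.card_subtype_le _
  let split : (ι → Ω) ≃ Ω × ({j // j ≠ i} → Ω) := Equiv.funSplitAt i Ω
  have union_overlap (o : ι → Ω) : z ∪ B (o i) ∪ overlap (B ∘ o) =
      z ∪ B (split o).1 ∪ overlap (B ∘ (split o).2) := by
    rw [union_assoc, union_assoc]
    exact congrArg (z ∪ ·) (union_overlap_eq_union_overlap_subtype (B ∘ o) i)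
  calc 8 * #{o : ι → Ω | f (z ∪ B (o i) ∪ overlap (B ∘ o)) ≠ f (z ∪ B (o i))}
      = 8 * #{q : Ω × ({j // j ≠ i} → Ω) |
          f (z ∪ B q.1 ∪ overlap (B ∘ q.2)) ≠ f (z ∪ B q.1)} := by
        congr 1
        refine card_equiv split fun o ↦ ?_
        rw [mem_filter_univ, mem_filter_univ, union_overlap]
        rfl
    _ = ∑ a, 8 * #{o : {j // j ≠ i} → Ω | f (z ∪ B a ∪ overlap (B ∘ o)) ≠ f (z ∪ B a)} := by
      simp only [card_filter, Fintype.sum_prod_type, mul_sum]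
    _ ≤ Fintype.card Ω * Fintype.card ({j // j ≠ i} → Ω) :=
      sum_le_card_nsmul _ _ _ fun a _ ↦ card_filter_overlap_ne_le hB ht hι' hf (z ∪ B a)
    _ = Fintype.card (ι → Ω) := by rw [Fintype.card_congr split, Fintype.card_prod]

theorem HasSpreadSensitiveBlocks.half {b : ℕ} (hb : MonotoneBlockSensitivityLE f b) (ht : 0 ≤ t)
    (hbt : 16 * (2 * b + 1 : ℝ) ^ 2 * t ≤ 1) (h : HasSpreadSensitiveBlocks f t) :
    HasSpreadSensitiveBlocks f (t / 2) := by
  classical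
  by_contra hhalf
  obtain ⟨Ω, _, _, z, B, hB, hsens⟩ := h
  have hcard : 16 * (Fintype.card (Fin (2 * b + 1)) : ℝ) ^ 2 * t ≤ 1 := by simpa using hbt
  obtain ⟨o, hoverlap, hfew⟩ := exists_not_and_four_mul_card_le
    (card_filter_overlap_ne_le hB ht hcard hhalf z)
    (card_filter_union_overlap_ne_le hB ht hcard hhalf z)
  let bad : Finset (Fin (2 * b + 1)) :=
    {i | f (z ∪ B (o i) ∪ overlap (B ∘ o)) ≠ f (z ∪ B (o i))}
  have card_good_le : Fintype.card ↥(badᶜ) ≤ b := by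
    refine hb _ (z ∪ overlap (B ∘ o)) (fun i ↦ B (o i)) (fun i j hij x hx ↦ ?_) fun i ↦ ?_
    · obtain ⟨hi, hj⟩ := mem_inter.1 hx
      exact mem_union_right _ (mem_overlap.2 ⟨i, j, Subtype.coe_ne_coe.2 hij, hi, hj⟩)
    · have hgood : f (z ∪ B (o i) ∪ overlap (B ∘ o)) = f (z ∪ B (o i)) := by
        simpa [bad] using i.2
      rw [union_right_comm, hgood, not_not.1 hoverlap]
      exact hsens (o i)
  have card_bad_add := card_add_card_compl bad
  rw [Fintype.card_coe] at card_good_le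
  rw [Fintype.card_fin] at hfew card_bad_add
  change 4 * #bad ≤ 2 * b + 1 at hfew
  omega

theorem IsSpread.one_le_card_mul [Nonempty Ω] [Fintype α] (hB : IsSpread B t)
    (hne : ∀ ω, (B ω).Nonempty) : 1 ≤ Fintype.card α * t := by
  have card_pos : (0 : ℝ) < Fintype.card Ω := by exact_mod_cast Fintype.card_pos
  refine le_of_mul_le_mul_right ?_ card_pos
  calc 1 * (Fintype.card Ω : ℝ) ≤ ∑ ω, (#(B ω) : ℝ) := by
        simpa using card_nsmul_le_sum univ (fun ω ↦ (#(B ω) : ℝ)) 1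
          fun ω _ ↦ by exact_mod_cast (hne ω).card_pos
    _ = ∑ x, (#{ω | x ∈ B ω} : ℝ) := by
      exact_mod_cast by
        simpa [bipartiteAbove, bipartiteBelow] using
          sum_card_bipartiteAbove_eq_sum_card_bipartiteBelow (s := univ) (t := univ)
            fun ω x ↦ x ∈ B ω
    _ ≤ Fintype.card α * t * Fintype.card Ω := by
      simpa [mul_assoc] using sum_le_card_nsmul univ _ _ fun x _ ↦ hB x

theorem not_hasSpreadSensitiveBlocks [Finite α] {b : ℕ} (hb : MonotoneBlockSensitivityLE f b)
    (ht : 0 ≤ t) (hbt : 16 * (2 * b + 1 : ℝ) ^ 2 * t ≤ 1) : ¬HasSpreadSensitiveBlocks f t := by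
  have := Fintype.ofFinite α
  intro h
  have iterate_half (m : ℕ) : HasSpreadSensitiveBlocks f (t / 2 ^ m) := by
    induction m with
    | zero => simpa using h
    | succ m ih =>
      have half_le : 16 * (2 * b + 1 : ℝ) ^ 2 * (t / 2 ^ m) ≤ 1 := by
        refine le_trans ?_ hbt
        gcongr
        exact div_le_self ht (one_le_pow₀ one_le_two)
      simpa only [div_div, ← pow_succ] using ih.half hb (by positivity) half_le
  obtain ⟨m, hm⟩ := pow_unbounded_of_one_lt (Fintype.card α * t) (one_lt_two (α := ℝ))
  obtain ⟨Ω, _, _, z, B, hB, hsens⟩ := iterate_half m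
  have one_le := hB.one_le_card_mul fun ω ↦ nonempty_iff_ne_empty.2 fun h ↦
    hsens ω (by rw [h, union_empty])
  rw [← mul_div_assoc, one_le_div (by positivity)] at one_le
  exact hm.not_ge one_le

end SpreadSensitiveBlocks

section HittingSet

variable {α β : Type*} [DecidableEq α]

theorem exists_hitting_card_le_of_card_lt_exp {F : Finset (Finset α)} {δ : ℝ}
    (hδ : ∀ G ⊆ F, G.Nonempty → ∃ x, δ * #G ≤ #{s ∈ G | x ∈ s}) {m : ℕ}
    (hm : (#F : ℝ) < Real.exp (δ * m)) :
    ∃ H : Finset α, (∀ s ∈ F, (H ∩ s).Nonempty) ∧ #H ≤ m := by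
  induction m generalizing F with
  | zero =>
    have hF : F = ∅ := by simpa using hm
    exact ⟨∅, by simp [hF], le_rfl⟩
  | succ m ih =>
    rcases F.eq_empty_or_nonempty with rfl | hF
    · exact ⟨∅, by simp, Nat.zero_le _⟩
    obtain ⟨x, hx⟩ := hδ F subset_rfl hF
    have card_add : (#{s ∈ F | x ∈ s} : ℝ) + #{s ∈ F | x ∉ s} = #F := by
      exact_mod_cast card_filter_add_card_filter_not (s := F) fun s ↦ x ∈ s
    have card_missed_lt : (#{s ∈ F | x ∉ s} : ℝ) < Real.exp (δ * m) :=
      calc (#{s ∈ F | x ∉ s} : ℝ) ≤ #F * (1 - δ) := by linarith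
        _ ≤ #F * Real.exp (-δ) := by gcongr; exact Real.one_sub_le_exp_neg δ
        _ < Real.exp (δ * (m + 1 : ℕ)) * Real.exp (-δ) := by gcongr
        _ = Real.exp (δ * m) := by rw [← Real.exp_add]; push_cast; ring_nf
    obtain ⟨H, hH, hHm⟩ := ih (fun G hG ↦ hδ G (hG.trans (filter_subset _ _))) card_missed_lt
    refine ⟨insert x H, fun s hs ↦ ?_, (card_insert_le _ _).trans (by omega)⟩
    by_cases hxs : x ∈ s
    · exact ⟨x, mem_inter.2 ⟨mem_insert_self _ _, hxs⟩⟩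
    · exact (hH s (mem_filter.2 ⟨hs, hxs⟩)).mono
        (inter_subset_inter_right (subset_insert x H))

theorem exists_hitting_card_le_log {F : Finset (Finset α)} {δ : ℝ} (hδ_pos : 0 < δ)
    (hδ : ∀ G ⊆ F, G.Nonempty → ∃ x, δ * #G ≤ #{s ∈ G | x ∈ s}) :
    ∃ H : Finset α, (∀ s ∈ F, (H ∩ s).Nonempty) ∧ (#H : ℝ) ≤ Real.log #F / δ + 1 := by
  let m : ℕ := ⌊Real.log #F / δ⌋₊ + 1
  have log_lt : Real.log #F < δ * m := by
    rw [mul_comm, ← div_lt_iff₀ hδ_pos]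
    exact_mod_cast Nat.lt_floor_add_one _
  have card_lt : (#F : ℝ) < Real.exp (δ * m) := by
    rcases F.eq_empty_or_nonempty with rfl | hF
    · simpa using Real.exp_pos _
    · exact (Real.log_lt_iff_lt_exp (by exact_mod_cast hF.card_pos)).1 log_lt
  obtain ⟨H, hH, hHm⟩ := exists_hitting_card_le_of_card_lt_exp hδ card_lt
  refine ⟨H, hH, ?_⟩
  calc (#H : ℝ) ≤ m := by exact_mod_cast hHm
    _ = ⌊Real.log #F / δ⌋₊ + 1 := by push_cast [m]; rfl
    _ ≤ Real.log #F / δ + 1 := by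
      gcongr
      exact Nat.floor_le (div_nonneg (Real.log_natCast_nonneg _) hδ_pos.le)

theorem exists_hitting_of_monotoneBlockSensitivityLE [Finite α] {f : Finset α → β} {b : ℕ}
    (hb : MonotoneBlockSensitivityLE f b) {F : Finset (Finset α)} (hF : ∀ s ∈ F, f s ≠ f ∅) :
    ∃ H : Finset α, (∀ s ∈ F, (H ∩ s).Nonempty) ∧
      (#H : ℝ) ≤ 16 * (2 * b + 1) ^ 2 * Real.log #F + 1 := by
  let δ : ℝ := (16 * (2 * b + 1) ^ 2)⁻¹
  have hδ_pos : 0 < δ := by positivity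
  have exists_popular : ∀ G ⊆ F, G.Nonempty → ∃ x, δ * #G ≤ #{s ∈ G | x ∈ s} := by
    intro G hGF hG
    by_contra! hspread
    refine not_hasSpreadSensitiveBlocks hb hδ_pos.le (mul_inv_cancel₀ (by positivity)).le
      (.of_finset hG (z := ∅) (B := id) (fun x ↦ (hspread x).le) fun s hs ↦ ?_)
    simpa using hF s (hGF hs)
  simpa only [δ, div_inv_eq_mul, mul_comm (Real.log _)] using
    exists_hitting_card_le_log hδ_pos exists_popular

end HittingSet

theorem exists_subset_coeff_ne_zero_and_apply_ne {κ : Type*} {c f : Finset κ → ℝ}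
    (hc : IsMultilinearExpansion c f) {s : Finset κ} (hs : c s ≠ 0) (hs_ne : s ≠ ∅) :
    ∃ u ⊆ s, c u ≠ 0 ∧ f u ≠ f ∅ := by
  obtain ⟨u, hus, hu⟩ := exists_minimal_le_of_wellFoundedLT
    (fun u : Finset κ ↦ c u ≠ 0 ∧ u ≠ ∅) s ⟨hs, hs_ne⟩
  refine ⟨u, hus, hu.prop.1, ?_⟩
  have coeff_eq_zero : ∀ v ∈ u.powerset, v ≠ ∅ ∧ v ≠ u → c v = 0 := by
    rintro v hv ⟨hv_ne, hvu⟩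
    by_contra hcv
    exact hvu (hu.eq_of_le ⟨hcv, hv_ne⟩ (mem_powerset.1 hv))
  have value_u : f u = c ∅ + c u := (hc u).trans <|
    sum_eq_add_of_mem _ _ (empty_mem_powerset u) (mem_powerset_self u) hu.prop.2.symm
      coeff_eq_zero
  have value_empty : f ∅ = c ∅ := by simp [hc ∅]
  rw [value_u, value_empty]
  simpa using hu.prop.1

theorem card_filter_coeff_ne_zero {n : ℕ} (f : Finset (Fin n) → ℝ) :
    #{s | coeff f s ≠ 0} = sparsity f := by
  rw [sparsity, ← Set.ncard_coe_finset]
  simp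

theorem log_natCast_le_log_natCast {k m : ℕ} (hkm : k ≤ m) : Real.log k ≤ Real.log m := by
  rcases k.eq_zero_or_pos with rfl | hk
  · simpa using Real.log_natCast_nonneg m
  · exact Real.log_le_log (by exact_mod_cast hk) (by exact_mod_cast hkm)

theorem hitting_bound_le_logb_pow_five {r : ℕ} (hr : 2 ≤ r) :
    16 * (2 * (2 * (Nat.log 2 r + 1) ^ 2 : ℕ) + 1 : ℝ) ^ 2 * Real.log r + 1 ≤
      4625 * Real.logb 2 r ^ 5 := by
  set L := Real.logb 2 r
  have one_le_L : 1 ≤ L := by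
    rw [Real.le_logb_iff_rpow_le one_lt_two (by positivity), Real.rpow_one]
    exact_mod_cast hr
  have natLog_le : (Nat.log 2 r : ℝ) ≤ L := Real.natLog_le_logb r 2
  have log_le : Real.log r ≤ L := by
    have log_two_le : Real.log 2 ≤ 1 := Real.log_two_lt_d9.le.trans (by norm_num)
    exact le_div_self (Real.log_natCast_nonneg r) (Real.log_pos one_lt_two) log_two_le
  have inner_le : (2 * (2 * (Nat.log 2 r + 1) ^ 2 : ℕ) + 1 : ℝ) ≤ 17 * L ^ 2 := by
    push_cast
    nlinarith
  calc _ ≤ 16 * (17 * L ^ 2) ^ 2 * L + L ^ 5 := by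
        gcongr
        exact one_le_pow₀ one_le_L
    _ = 4625 * L ^ 5 := by ring

/-- There is an absolute constant `C > 0` such that any boolean function `f` with
sparsity `r ≥ 2` admits a hitting set for `mon f` of size at most `C·(log₂ r)^5`. -/
theorem stmt0 :
    ∃ C : ℝ, 0 < C ∧
      ∀ (n : ℕ) (f : Finset (Fin n) → ℝ),
        (∀ x, f x = 0 ∨ f x = 1) →
        2 ≤ sparsity f →
        ∃ H : Finset (Fin n),
          (∀ s ∈ mon f, (H ∩ s).Nonempty) ∧
          (H.card : ℝ) ≤ C * (Real.logb 2 (sparsity f)) ^ 5 := by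
  refine ⟨4625, by norm_num, fun n f hf hr ↦ ?_⟩
  have hc := isMultilinearExpansion_coeff f
  have hb := monotoneBlockSensitivityLE_of_card_lt hc hf
    ((card_filter_coeff_ne_zero f).trans_lt (Nat.lt_pow_succ_log_self one_lt_two _))
  let F : Finset (Finset (Fin n)) := {u | coeff f u ≠ 0 ∧ f u ≠ f ∅}
  obtain ⟨H, hH, hHcard⟩ :=
    exists_hitting_of_monotoneBlockSensitivityLE hb (F := F) fun u hu ↦ (mem_filter.1 hu).2.2
  refine ⟨H, fun s hs ↦ ?_, hHcard.trans (le_trans ?_ (hitting_bound_le_logb_pow_five hr))⟩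
  · obtain ⟨u, hus, hu⟩ := exists_subset_coeff_ne_zero_and_apply_ne hc hs.1 hs.2
    exact (hH u (mem_filter.2 ⟨mem_univ u, hu⟩)).mono (inter_subset_inter_left hus)
  · have card_le : #F ≤ sparsity f := by
      rw [← card_filter_coeff_ne_zero f]
      exact card_le_card (monotone_filter_right _ fun u _ hu ↦ hu.1)
    gcongr 16 * _ * ?_ + 1
    exact log_natCast_le_log_natCast card_le
end

section
/- There is an absolute constant C > 0 such that the following holds. Let f : {0,1}^n → {0,1} be a boolean function with sparsity spar(f) = r ≥ 2. Then for every z ∈ {0,1}^n, the family W(f,z) = {w ⊆ [n]∖z : f(z ∨ w) ≠ f(z)} has a hitting set of size at most C·(log₂ r)^5; that is, HSC(f) = O((log r)^5). -/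
/-- `W f z`: the family of sets `w ⊆ [n] ∖ z` such that `f (z ∨ w) ≠ f z`. -/
def W {n : ℕ} (f : Finset (Fin n) → ℝ) (z : Finset (Fin n)) : Set (Finset (Fin n)) :=
  {w | w ⊆ zᶜ ∧ f (z ∪ w) ≠ f z}

/-!
If `f` has sparsity at most `2 ^ d` and is sensitive to each of `n` disjoint blocks at `z`, identify
the variables of each block and fix those of `z`; the sparsity does not grow. On `[0, 1/4]` the
resulting polynomial on the diagonal `(t, …, t)` is, up to an error of `1`, its part of degree at
most `d`. That part is bounded by `2` there and has derivative `± n` at `0`, so Markov's inequality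
gives `n ≤ 16 d²`: the monotone block sensitivity is `O(d²)`.

Sample independently from the distribution of an optimal fractional packing of the sensitive sets
at `z`. A point lies in two of few samples with such small probability that the set `u` of these
points is unlikely to be sensitive, both at `z` and at the union of `z` with a further sample. The
samples then become disjoint sensitive sets at `z ∪ u` once `u` is removed from them. Hence the
fractional block sensitivity is at most quadratic in the integral one, so `O(d⁴)`.

Weighting the members of a family of sensitive sets equally shows that some point lies in a
`1 / O(d⁴)` fraction of them. Each minimal sensitive set is a monomial of `f (z ∪ ·)`, so there are
at most `2 ^ d` of them, and choosing popular points greedily hits them all after `O(d⁵)` steps.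
-/

open Finset
open scoped Function Polynomial

section Moebius

lemma sum_Icc_pow_mul_pow {α R : Type*} [DecidableEq α] [CommSemiring R] (a b : R)
    {s t : Finset α} (h : s ⊆ t) :
    ∑ y ∈ Icc s t, a ^ (#y - #s) * b ^ (#t - #y) = (a + b) ^ (#t - #s) := by
  have disjoint_of_mem {u : Finset α} (hu : u ∈ (t \ s).powerset) : Disjoint s u :=
    disjoint_sdiff.mono_right (mem_powerset.1 hu)
  rw [Icc_eq_image_powerset h, sum_image, ← card_sdiff_of_subset h,
    ← Finset.sum_pow_mul_eq_add_pow]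
  · refine sum_congr rfl fun u hu => ?_
    rw [card_union_of_disjoint (disjoint_of_mem hu), card_sdiff_of_subset h,
      Nat.add_sub_cancel_left, Nat.sub_sub]
  · intro u hu v hv huv
    have hsdiff : (s ∪ u) \ s = (s ∪ v) \ s := congrArg (· \ s) huv
    rwa [union_sdiff_cancel_left (disjoint_of_mem hu),
      union_sdiff_cancel_left (disjoint_of_mem hv)] at hsdiff

lemma sum_powerset_sum_powerset {α M : Type*} [DecidableEq α] [AddCommMonoid M]
    (F : Finset α → Finset α → M) (x : Finset α) :
    ∑ s ∈ x.powerset, ∑ t ∈ s.powerset, F s t = ∑ t ∈ x.powerset, ∑ s ∈ Icc t x, F s t :=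
  sum_comm' fun s t => by
    simp only [mem_powerset, mem_Icc]
    exact ⟨fun h => ⟨⟨h.2, h.1⟩, h.2.trans h.1⟩, fun h => ⟨h.1.2, h.1.1⟩⟩

variable {n : ℕ}

lemma sum_powerset_coeff (f : Finset (Fin n) → ℝ) (x : Finset (Fin n)) :
    ∑ s ∈ x.powerset, coeff f s = f x := by
  have alternating_sum : ∀ t ∈ x.powerset,
      ∑ s ∈ Icc t x, (-1 : ℝ) ^ (#s - #t) * f t = if t = x then f t else 0 := by
    intro t ht
    have hcard := sum_Icc_pow_mul_pow (-1 : ℝ) 1 (mem_powerset.1 ht)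
    simp only [one_pow, mul_one, neg_add_cancel] at hcard
    rw [← sum_mul, hcard]
    split_ifs with htx
    · simp [htx]
    · have := card_lt_card ((mem_powerset.1 ht).ssubset_of_ne htx)
      rw [zero_pow (by omega), zero_mul]
  unfold coeff
  rw [sum_powerset_sum_powerset, sum_congr rfl alternating_sum]
  simp

lemma coeff_eq_of_forall_eq_sum_powerset {f a : Finset (Fin n) → ℝ}
    (h : ∀ x, f x = ∑ s ∈ x.powerset, a s) (s : Finset (Fin n)) : coeff f s = a s := by
  induction s using Finset.strongInduction with
  | H s ih =>
    have hsum : ∑ t ∈ s.powerset, coeff f t = ∑ t ∈ s.powerset, a t :=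
      (sum_powerset_coeff f s).trans (h s)
    have hssubsets : ∑ t ∈ s.ssubsets, coeff f t = ∑ t ∈ s.ssubsets, a t :=
      sum_congr rfl fun t ht => ih t (mem_ssubsets.1 ht)
    rw [← sum_erase_add _ _ (mem_powerset_self s), ← sum_erase_add _ _ (mem_powerset_self s),
      ← ssubsets, hssubsets] at hsum
    exact add_left_cancel hsum

lemma coeff_eq_sub_of_forall_ssubset {f : Finset (Fin n) → ℝ} {s : Finset (Fin n)}
    (hs : s.Nonempty) (h : ∀ t ⊂ s, f t = f ∅) : coeff f s = f s - f ∅ := by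
  have alternating_sum : ∑ t ∈ s.powerset, (-1 : ℝ) ^ (#s - #t) = 0 := by
    simpa [hs.card_ne_zero] using Finset.sum_pow_mul_eq_add_pow (1 : ℝ) (-1) s
  calc coeff f s = ∑ t ∈ s.powerset, (-1 : ℝ) ^ (#s - #t) * (f t - f ∅) := by
        simp only [coeff, mul_sub, sum_sub_distrib, ← sum_mul, alternating_sum, zero_mul, sub_zero]
    _ = (-1 : ℝ) ^ (#s - #s) * (f s - f ∅) := by
        refine sum_eq_single s (fun t ht hts => ?_) (by simp)
        rw [h t ((mem_powerset.1 ht).ssubset_of_ne hts), sub_self, mul_zero]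
    _ = f s - f ∅ := by simp

lemma coeff_singleton (f : Finset (Fin n) → ℝ) (i : Fin n) : coeff f {i} = f {i} - f ∅ :=
  coeff_eq_sub_of_forall_ssubset (singleton_nonempty i) fun t ht => by
    rw [ssubset_singleton_iff.1 ht]

lemma abs_coeff_le {f : Finset (Fin n) → ℝ} (hf : ∀ x, |f x| ≤ 1) (s : Finset (Fin n)) :
    |coeff f s| ≤ 2 ^ #s :=
  calc |coeff f s| ≤ ∑ t ∈ s.powerset, |(-1 : ℝ) ^ (#s - #t) * f t| := abs_sum_le_sum_abs _ _
    _ ≤ ∑ _t ∈ s.powerset, 1 := sum_le_sum fun t _ => by simpa [abs_mul] using hf t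
    _ = 2 ^ #s := by simp

open Classical in
lemma sparsity_eq_card (f : Finset (Fin n) → ℝ) : sparsity f = #{s | coeff f s ≠ 0} := by
  rw [sparsity, ← Set.ncard_coe_finset]
  simp

end Moebius

section Composition

/-- The smallest `y` with `s ⊆ φ y`, when `φ` preserves intersections and `s ⊆ φ univ`: a left
adjoint of `φ` on the sets below `φ univ`. It sends the monomials of `f` to those of `f ∘ φ`. -/
def leastCover {ι α : Type*} [Fintype ι] [DecidableEq ι] [DecidableEq α]
    (φ : Finset ι → Finset α) (s : Finset α) : Finset ι :=
  ({y | s ⊆ φ y} : Finset (Finset ι)).inf id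

lemma subset_apply_iff_leastCover_subset {ι α : Type*} [Fintype ι] [DecidableEq ι]
    [DecidableEq α] {φ : Finset ι → Finset α} (hφ : ∀ y y', φ (y ∩ y') = φ y ∩ φ y')
    {s : Finset α} (hs : s ⊆ φ univ) {y : Finset ι} :
    s ⊆ φ y ↔ leastCover φ s ⊆ y := by
  refine ⟨fun h => Finset.inf_le (f := id) (by simpa using h), fun h => ?_⟩
  have subset_apply_leastCover : s ⊆ φ (leastCover φ s) :=
    Finset.inf_induction (p := fun y => s ⊆ φ y) hs
      (fun y hy y' hy' => by
        rw [inf_eq_inter, hφ]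
        exact subset_inter hy hy') (by simp)
  rw [← inter_eq_left.2 h, hφ] at subset_apply_leastCover
  exact (subset_inter_iff.1 subset_apply_leastCover).2

variable {n k : ℕ} {φ : Finset (Fin k) → Finset (Fin n)}

lemma coeff_comp_eq_sum (f : Finset (Fin n) → ℝ) (hφ : ∀ y y', φ (y ∩ y') = φ y ∩ φ y')
    (t : Finset (Fin k)) :
    coeff (f ∘ φ) t = ∑ s with s ⊆ φ univ ∧ leastCover φ s = t, coeff f s := by
  refine coeff_eq_of_forall_eq_sum_powerset
    (a := fun t => ∑ s with s ⊆ φ univ ∧ leastCover φ s = t, coeff f s) (fun y => ?_) t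
  have powerset_apply : (φ y).powerset =
      ({s | s ⊆ φ univ ∧ leastCover φ s ⊆ y} : Finset (Finset (Fin n))) := by
    have hmono : φ y ⊆ φ univ := by
      rw [← inter_univ y, hφ]
      exact inter_subset_right
    ext s
    simp only [mem_powerset, mem_filter, mem_univ, true_and]
    exact ⟨fun h => ⟨h.trans hmono, (subset_apply_iff_leastCover_subset hφ (h.trans hmono)).1 h⟩,
      fun h => (subset_apply_iff_leastCover_subset hφ h.1).2 h.2⟩
  rw [Function.comp_apply, ← sum_powerset_coeff f (φ y), powerset_apply,
    ← sum_fiberwise_of_maps_to (t := y.powerset) (g := leastCover φ) (by simp)]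
  refine sum_congr rfl fun u hu => sum_congr ?_ fun _ _ => rfl
  ext s
  simp only [mem_powerset, mem_filter, mem_univ, true_and] at hu ⊢
  exact ⟨fun h => ⟨h.1.1, h.2⟩, fun h => ⟨⟨h.1, h.2.subset.trans hu⟩, h.2⟩⟩

lemma sparsity_comp_le (f : Finset (Fin n) → ℝ) (hφ : ∀ y y', φ (y ∩ y') = φ y ∩ φ y') :
    sparsity (f ∘ φ) ≤ sparsity f := by
  refine (Set.ncard_le_ncard (t := leastCover φ '' {s | coeff f s ≠ 0}) ?_).trans Set.ncard_image_le
  intro t ht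
  rw [Set.mem_ofPred_eq, coeff_comp_eq_sum f hφ] at ht
  obtain ⟨s, hs, hcoeff⟩ := exists_ne_zero_of_sum_ne_zero ht
  exact ⟨s, hcoeff, (mem_filter.1 hs).2.2⟩

lemma union_biUnion_inter {ι α : Type*} [DecidableEq ι] [DecidableEq α] {v : ι → Finset α}
    (hv : Pairwise (Disjoint on v)) (z : Finset α) (y y' : Finset ι) :
    z ∪ (y ∩ y').biUnion v = (z ∪ y.biUnion v) ∩ (z ∪ y'.biUnion v) := by
  have hinter : (y ∩ y').biUnion v = y.biUnion v ∩ y'.biUnion v := by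
    refine subset_antisymm (subset_inter (biUnion_subset_biUnion_of_subset_left _ inter_subset_left)
      (biUnion_subset_biUnion_of_subset_left _ inter_subset_right)) fun x hx => ?_
    simp only [mem_inter, mem_biUnion] at hx ⊢
    obtain ⟨⟨i, hi, hxi⟩, j, hj, hxj⟩ := hx
    obtain rfl : i = j := hv.eq fun hdisj => disjoint_left.1 hdisj hxi hxj
    exact ⟨i, ⟨hi, hj⟩, hxi⟩
  rw [hinter, union_inter_distrib_left]

end Composition

section Markov

lemma abs_eval_one_derivative_le {P : ℝ[X]} {d : ℕ} {A : ℝ} (hA : 0 < A) (hdeg : P.degree ≤ d)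
    (hP : ∀ x ∈ Set.Icc (-1) 1, |P.eval x| ≤ A) : |P.derivative.eval 1| ≤ A * d ^ 2 := by
  have scaled_le (c : ℝ) (hc : |c| = A⁻¹) : c * P.derivative.eval 1 ≤ d ^ 2 := by
    have hbound : ∀ x ∈ Set.Icc (-1) 1, |(Polynomial.C c * P).eval x| ≤ 1 := fun x hx => by
      rw [Polynomial.eval_C_mul, abs_mul, hc, inv_mul_le_one₀ hA]
      exact hP x hx
    have hdeg' : (Polynomial.C c * P).degree ≤ d := by
      rw [Polynomial.degree_C_mul (abs_ne_zero.1 (hc.trans_ne (inv_ne_zero hA.ne')))]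
      exact hdeg
    have hderiv := Polynomial.Chebyshev.eval_iterate_derivative_le_of_forall_abs_le_one (k := 1)
      le_rfl hdeg' hbound
    simpa [Polynomial.Chebyshev.derivative_T_eval_one] using hderiv
  have hpos := scaled_le A⁻¹ (abs_of_pos (inv_pos.2 hA))
  have hneg := scaled_le (-A⁻¹) (by rw [abs_neg, abs_of_pos (inv_pos.2 hA)])
  rw [← inv_mul_le_iff₀ hA, ← abs_of_pos (inv_pos.2 hA), ← abs_mul, abs_le']
  exact ⟨hpos, by linarith⟩

lemma abs_eval_zero_derivative_le {P : ℝ[X]} {d : ℕ} {A δ : ℝ} (hA : 0 < A) (hδ : 0 < δ)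
    (hdeg : P.natDegree ≤ d) (hP : ∀ x ∈ Set.Icc 0 δ, |P.eval x| ≤ A) :
    |P.derivative.eval 0| ≤ 2 / δ * (A * d ^ 2) := by
  let Q : ℝ[X] := P.comp (Polynomial.C (δ / 2) * (1 - Polynomial.X))
  have eval_Q (x : ℝ) : Q.eval x = P.eval (δ / 2 * (1 - x)) := by
    simp [Q, Polynomial.eval_comp]
  have hQ : |Q.derivative.eval 1| = δ / 2 * |P.derivative.eval 0| := by
    rw [← abs_of_pos (half_pos hδ), ← abs_mul]
    simp [Q, Polynomial.derivative_comp, Polynomial.eval_comp]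
  have hQdeg : Q.degree ≤ d := by
    refine Polynomial.degree_le_of_natDegree_le ((Polynomial.natDegree_comp_le).trans ?_)
    have haffine : (Polynomial.C (δ / 2) * (1 - Polynomial.X) : ℝ[X]).natDegree ≤ 1 := by
      compute_degree
    nlinarith
  have hQbound : ∀ x ∈ Set.Icc (-1) 1, |Q.eval x| ≤ A := fun x hx => by
    rw [eval_Q]
    exact hP _ ⟨by nlinarith [hx.2], by nlinarith [hx.1]⟩
  have hmarkov := abs_eval_one_derivative_le hA hQdeg hQbound
  rw [hQ] at hmarkov
  rw [div_mul_eq_mul_div, le_div_iff₀ hδ]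
  linarith

end Markov

section Sensitivity

variable {n : ℕ} {f : Finset (Fin n) → ℝ}

/-- For `t ∈ [0, 1]` the right-hand side is the mean of `f` at a random set containing each element
independently with probability `t`. -/
lemma sum_coeff_mul_pow_card (f : Finset (Fin n) → ℝ) (t : ℝ) :
    ∑ s, coeff f s * t ^ #s = ∑ y, t ^ #y * (1 - t) ^ (n - #y) * f y := by
  have sum_superset (s : Finset (Fin n)) :
      ∑ y with s ⊆ y, t ^ #y * (1 - t) ^ (n - #y) = t ^ #s := by
    have hbinomial := sum_Icc_pow_mul_pow t (1 - t) (subset_univ s)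
    have hIcc : ({y | s ⊆ y} : Finset (Finset (Fin n))) = Icc s univ := by ext; simp
    rw [add_sub_cancel, one_pow, card_univ, Fintype.card_fin] at hbinomial
    calc ∑ y with s ⊆ y, t ^ #y * (1 - t) ^ (n - #y)
        = ∑ y ∈ Icc s univ, t ^ #s * (t ^ (#y - #s) * (1 - t) ^ (n - #y)) := by
          refine sum_congr hIcc fun y hy => ?_
          rw [← mul_assoc, ← pow_add, Nat.add_sub_cancel' (card_le_card (mem_Icc.1 hy).1)]
      _ = t ^ #s := by rw [← mul_sum, hbinomial, mul_one]
  calc ∑ s, coeff f s * t ^ #s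
      = ∑ s, ∑ y with s ⊆ y, t ^ #y * (1 - t) ^ (n - #y) * coeff f s := by
        refine sum_congr rfl fun s _ => ?_
        rw [← sum_mul, sum_superset, mul_comm]
    _ = ∑ y, ∑ s ∈ y.powerset, t ^ #y * (1 - t) ^ (n - #y) * coeff f s :=
        sum_comm' fun s y => by simp
    _ = ∑ y, t ^ #y * (1 - t) ^ (n - #y) * f y := by
        simp only [← mul_sum, sum_powerset_coeff]

lemma sum_coeff_mul_pow_card_mem_Icc (hf : ∀ x, f x ∈ Set.Icc 0 1) {t : ℝ}
    (ht : t ∈ Set.Icc 0 1) : ∑ s, coeff f s * t ^ #s ∈ Set.Icc 0 1 := by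
  have weight_nonneg (y : Finset (Fin n)) : 0 ≤ t ^ #y * (1 - t) ^ (n - #y) :=
    mul_nonneg (pow_nonneg ht.1 _) (pow_nonneg (sub_nonneg.2 ht.2) _)
  have sum_weight : ∑ y : Finset (Fin n), t ^ #y * (1 - t) ^ (n - #y) = 1 := by
    simpa using Fintype.sum_pow_mul_eq_add_pow (Fin n) t (1 - t)
  rw [sum_coeff_mul_pow_card]
  refine ⟨sum_nonneg fun y _ => mul_nonneg (weight_nonneg y) (hf y).1, ?_⟩
  exact (sum_le_sum fun y _ => mul_le_of_le_one_right (weight_nonneg y) (hf y).2).trans_eq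
    sum_weight

lemma abs_sum_coeff_mul_pow_card_tail_le (hf : ∀ x, |f x| ≤ 1) (d : ℕ) {t : ℝ}
    (ht : t ∈ Set.Icc 0 (1 / 4)) :
    |∑ s with ¬ #s ≤ d, coeff f s * t ^ #s| ≤ sparsity f * (1 / 2) ^ d := by
  classical
  have term_le (s : Finset (Fin n)) (hs : ¬ #s ≤ d) : |coeff f s * t ^ #s| ≤ (1 / 2) ^ d :=
    calc |coeff f s * t ^ #s| = |coeff f s| * t ^ #s := by
          rw [abs_mul, abs_of_nonneg (pow_nonneg ht.1 _)]
      _ ≤ 2 ^ #s * (1 / 4) ^ #s :=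
          mul_le_mul (abs_coeff_le hf s) (pow_le_pow_left₀ ht.1 ht.2 _) (pow_nonneg ht.1 _)
            (by positivity)
      _ = (1 / 2) ^ #s := by rw [← mul_pow]; norm_num
      _ ≤ (1 / 2) ^ d := pow_le_pow_of_le_one (by norm_num) (by norm_num) (by omega)
  calc |∑ s with ¬ #s ≤ d, coeff f s * t ^ #s|
      = |∑ s with ¬ #s ≤ d ∧ coeff f s ≠ 0, coeff f s * t ^ #s| := by
        rw [← filter_filter]
        exact congrArg abs (sum_filter_of_ne fun s _ h => left_ne_zero_of_mul h).symm
    _ ≤ ∑ s with ¬ #s ≤ d ∧ coeff f s ≠ 0, |coeff f s * t ^ #s| := abs_sum_le_sum_abs _ _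
    _ ≤ #{s | ¬ #s ≤ d ∧ coeff f s ≠ 0} • (1 / 2 : ℝ) ^ d :=
        sum_le_card_nsmul _ _ _ fun s hs => term_le s (mem_filter.1 hs).2.1
    _ ≤ sparsity f * (1 / 2) ^ d := by
        rw [nsmul_eq_mul, sparsity_eq_card]
        gcongr
        exact fun h => h.2

/-- The part of degree at most `d` of the multilinear polynomial of `f` restricted to the
diagonal `(t, …, t)`, as a polynomial in `t` to which Markov's inequality applies. -/
noncomputable def truncatedDiagonal (f : Finset (Fin n) → ℝ) (d : ℕ) : ℝ[X] :=
  ∑ s with #s ≤ d, Polynomial.monomial #s (coeff f s)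

lemma eval_truncatedDiagonal (f : Finset (Fin n) → ℝ) (d : ℕ) (t : ℝ) :
    (truncatedDiagonal f d).eval t = ∑ s with #s ≤ d, coeff f s * t ^ #s := by
  simp [truncatedDiagonal, Polynomial.eval_finsetSum]

lemma natDegree_truncatedDiagonal_le (f : Finset (Fin n) → ℝ) (d : ℕ) :
    (truncatedDiagonal f d).natDegree ≤ d :=
  Polynomial.natDegree_sum_le_of_forall_le _ _ fun _ hs =>
    (Polynomial.natDegree_monomial_le _).trans (mem_filter.1 hs).2

lemma eval_zero_derivative_truncatedDiagonal (f : Finset (Fin n) → ℝ) {d : ℕ} (hd : 1 ≤ d) :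
    (truncatedDiagonal f d).derivative.eval 0 = ∑ i, (f {i} - f ∅) := by
  have filter_card_eq_one : ({s | #s ≤ d ∧ #s = 1} : Finset (Finset (Fin n))) =
      univ.image singleton := by
    ext s
    simp only [mem_filter, mem_univ, true_and, mem_image, card_eq_one, eq_comm (b := s)]
    refine ⟨fun h => h.2, fun h => ⟨?_, h⟩⟩
    obtain ⟨i, rfl⟩ := h
    simpa using hd
  rw [← Polynomial.coeff_zero_eq_eval_zero, Polynomial.coeff_derivative, truncatedDiagonal,
    Polynomial.finsetSum_coeff]
  simp only [Polynomial.coeff_monomial, ← sum_filter, filter_filter, zero_add, Nat.cast_zero,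
    mul_one, filter_card_eq_one]
  rw [sum_image singleton_injective.injOn]
  simp only [coeff_singleton]

lemma abs_eval_truncatedDiagonal_le (hf : ∀ x, f x ∈ Set.Icc 0 1) {d : ℕ}
    (hsp : sparsity f ≤ 2 ^ d) {t : ℝ} (ht : t ∈ Set.Icc 0 (1 / 4)) :
    |(truncatedDiagonal f d).eval t| ≤ 2 := by
  have hfull := sum_coeff_mul_pow_card_mem_Icc hf ⟨ht.1, ht.2.trans (by norm_num)⟩
  have htail : |∑ s with ¬ #s ≤ d, coeff f s * t ^ #s| ≤ 1 :=
    calc |∑ s with ¬ #s ≤ d, coeff f s * t ^ #s| ≤ sparsity f * (1 / 2) ^ d :=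
          abs_sum_coeff_mul_pow_card_tail_le
            (fun x => abs_le.2 ⟨by linarith [(hf x).1], (hf x).2⟩) d ht
      _ ≤ 2 ^ d * (1 / 2) ^ d := by gcongr; exact_mod_cast hsp
      _ = 1 := by rw [← mul_pow]; norm_num
  rw [← sum_filter_add_sum_filter_not univ (fun s : Finset (Fin n) => #s ≤ d),
    ← eval_truncatedDiagonal] at hfull
  rw [abs_le] at htail ⊢
  constructor <;> linarith [hfull.1, hfull.2]

lemma le_of_sparsity_le_of_apply_singleton_ne {d : ℕ} (hd : 1 ≤ d) (hf : ∀ x, f x = 0 ∨ f x = 1)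
    (hsp : sparsity f ≤ 2 ^ d) (hne : ∀ i, f {i} ≠ f ∅) : n ≤ 16 * d ^ 2 := by
  have hf' (x : Finset (Fin n)) : f x ∈ Set.Icc 0 1 := by
    rcases hf x with h | h <;> simp [h]
  have hslope (i : Fin n) : f {i} - f ∅ = 1 - 2 * f ∅ := by
    have := hne i
    rcases hf {i} with h | h <;> rcases hf ∅ with h' | h' <;> grind
  have hderiv : |(truncatedDiagonal f d).derivative.eval 0| = n := by
    rw [eval_zero_derivative_truncatedDiagonal f hd, sum_congr rfl fun i _ => hslope i]
    rcases hf ∅ with h | h <;> norm_num [h]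
  have hmarkov := abs_eval_zero_derivative_le two_pos (δ := 1 / 4) (by norm_num)
    (natDegree_truncatedDiagonal_le f d) fun t => abs_eval_truncatedDiagonal_le hf' hsp
  rw [hderiv] at hmarkov
  have : (n : ℝ) ≤ 16 * d ^ 2 := by linarith
  exact_mod_cast this

end Sensitivity

section BlockSensitivity

variable {α β : Type*} [Fintype α] [DecidableEq α] {f : Finset α → β} {z w : Finset α}

open Classical in
/-- The sets whose addition to `z` changes the value of `f`. Those disjoint from `z` form the
family `W(f, z)`; dropping disjointness lets a set be tested against several `z` at once. -/
noncomputable def sensitiveSets (f : Finset α → β) (z : Finset α) : Finset (Finset α) :=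
  {w | f (z ∪ w) ≠ f z}

lemma mem_sensitiveSets : w ∈ sensitiveSets f z ↔ f (z ∪ w) ≠ f z := by
  simp [sensitiveSets]

lemma notMem_sensitiveSets : w ∉ sensitiveSets f z ↔ f (z ∪ w) = f z := by
  rw [mem_sensitiveSets, not_not]

lemma nonempty_of_mem_sensitiveSets (hw : w ∈ sensitiveSets f z) : w.Nonempty := by
  rw [nonempty_iff_ne_empty]
  rintro rfl
  simp [mem_sensitiveSets] at hw

open Classical in
/-- The monotone block sensitivity of `f`: the largest number of pairwise disjoint sets each of
which changes the value of `f` when added to a common set `z`. -/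
noncomputable def mbs (f : Finset α → β) : ℕ :=
  univ.sup fun z => sup {B : Finset (Finset α) |
    B ⊆ sensitiveSets f z ∧ (B : Set (Finset α)).PairwiseDisjoint id} card

lemma card_le_mbs {ι : Type*} {J : Finset ι} {v : ι → Finset α}
    (hv : ∀ i ∈ J, v i ∈ sensitiveSets f z) (hdisj : (J : Set ι).PairwiseDisjoint v) :
    #J ≤ mbs f := by
  classical
  have hinj : Set.InjOn v J := fun i hi j hj hij => by
    by_contra hne
    have hempty : Disjoint (v i) (v i) := by simpa only [Function.onFun, hij] using hdisj hi hj hne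
    exact (nonempty_of_mem_sensitiveSets (hv i hi)).ne_empty (disjoint_self.1 hempty)
  rw [← card_image_of_injOn hinj]
  refine le_trans ?_ (le_sup (mem_univ z))
  refine le_sup (f := card) (mem_filter_univ _ |>.2 ⟨image_subset_iff.2 hv, ?_⟩)
  rw [coe_image]
  exact hinj.pairwiseDisjoint_image.2 hdisj

lemma mbs_le_of_sparsity_le {n d : ℕ} {f : Finset (Fin n) → ℝ} (hd : 1 ≤ d)
    (hf : ∀ x, f x = 0 ∨ f x = 1) (hsp : sparsity f ≤ 2 ^ d) : mbs f ≤ 16 * d ^ 2 := by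
  classical
  refine Finset.sup_le fun z _ => Finset.sup_le fun B hB => ?_
  obtain ⟨hBsens, hBdisj⟩ := mem_filter_univ B |>.1 hB
  let block : Fin #B → Finset (Fin n) := fun j => B.equivFin.symm j
  have hblock : Pairwise (Disjoint on block) := fun i j hij =>
    hBdisj (B.equivFin.symm i).2 (B.equivFin.symm j).2 fun h =>
      hij (B.equivFin.symm.injective (Subtype.ext h))
  let φ : Finset (Fin #B) → Finset (Fin n) := fun y => z ∪ y.biUnion block
  refine le_of_sparsity_le_of_apply_singleton_ne (f := f ∘ φ) hd (fun y => hf _)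
    ((sparsity_comp_le f (union_biUnion_inter hblock z)).trans hsp) fun j => ?_
  simpa [φ] using mem_sensitiveSets.1 (hBsens (B.equivFin.symm j).2)

end BlockSensitivity

section FractionalBlockSensitivity

variable {α β : Type*} [Fintype α] [DecidableEq α] {f : Finset α → β} {z : Finset α}

/-- Nonnegative weights on sets for which every point lies in sets of total weight at most one. -/
structure IsFractionalPacking (p : Finset α → ℝ) : Prop where
  nonneg : ∀ w, 0 ≤ p w
  sum_mem_le_one : ∀ x, ∑ w with x ∈ w, p w ≤ 1

/-- The fractional monotone block sensitivity of `f`: the largest total weight that a fractional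
packing puts on the sets changing the value of `f` when added to a common set `z`. The supremum is
over a nonempty set of reals bounded above by the number of points. -/
noncomputable def fmbs (f : Finset α → β) : ℝ :=
  sSup {v | ∃ z p, IsFractionalPacking p ∧ v = ∑ w ∈ sensitiveSets f z, p w}

lemma IsFractionalPacking.sum_sensitiveSets_le_card {p : Finset α → ℝ}
    (hp : IsFractionalPacking p) : ∑ w ∈ sensitiveSets f z, p w ≤ Fintype.card α :=
  calc ∑ w ∈ sensitiveSets f z, p w ≤ ∑ w ∈ sensitiveSets f z, ∑ _x ∈ w, p w := by
        refine sum_le_sum fun w hw => ?_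
        rw [sum_const, nsmul_eq_mul]
        refine le_mul_of_one_le_left (hp.nonneg w) ?_
        exact_mod_cast (nonempty_of_mem_sensitiveSets hw).card_pos
    _ = ∑ x, ∑ w ∈ sensitiveSets f z with x ∈ w, p w := sum_comm' fun w x => by simp
    _ ≤ ∑ _x : α, 1 := sum_le_sum fun x _ =>
        (sum_le_sum_of_subset_of_nonneg (filter_subset_filter _ (subset_univ _))
          fun w _ _ => hp.nonneg w).trans (hp.sum_mem_le_one x)
    _ = Fintype.card α := by simp

lemma IsFractionalPacking.sum_sensitiveSets_le_fmbs {p : Finset α → ℝ}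
    (hp : IsFractionalPacking p) : ∑ w ∈ sensitiveSets f z, p w ≤ fmbs f :=
  le_csSup ⟨Fintype.card α, by rintro _ ⟨z, p, hp, rfl⟩; exact hp.sum_sensitiveSets_le_card⟩
    ⟨z, p, hp, rfl⟩

lemma fmbs_nonneg (f : Finset α → β) : 0 ≤ fmbs f := by
  have hzero : IsFractionalPacking (0 : Finset α → ℝ) := ⟨fun _ => le_rfl, fun _ => by simp⟩
  simpa using hzero.sum_sensitiveSets_le_fmbs (f := f) (z := ∅)

lemma sum_mem_sensitiveSets_le_fmbs_mul {Ω : Type*} {S : Finset Ω} {q : Ω → ℝ}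
    {U : Ω → Finset α} {c : ℝ} (hq : ∀ ω ∈ S, 0 ≤ q ω) (hc : 0 < c)
    (hU : ∀ x, ∑ ω ∈ S with x ∈ U ω, q ω ≤ c) :
    ∑ ω ∈ S with U ω ∈ sensitiveSets f z, q ω ≤ fmbs f * c := by
  have hpacking : IsFractionalPacking fun w => (∑ ω ∈ S with U ω = w, q ω) / c := by
    refine ⟨fun w => div_nonneg (sum_nonneg fun ω hω => hq ω (mem_filter.1 hω).1) hc.le,
      fun x => ?_⟩
    rw [← sum_div, sum_fiberwise_eq_sum_filter, div_le_one₀ hc]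
    simpa using hU x
  have hle := hpacking.sum_sensitiveSets_le_fmbs (f := f) (z := z)
  rwa [← sum_div, sum_fiberwise_eq_sum_filter, div_le_iff₀ hc] at hle

end FractionalBlockSensitivity

section FiniteWeights

lemma sum_filter_exists_le {ι Ω : Type*} [Fintype Ω] {q : Ω → ℝ} (hq : ∀ ω, 0 ≤ q ω)
    (T : Finset ι) (E : ι → Ω → Prop) [∀ i, DecidablePred (E i)] :
    ∑ ω with ∃ i ∈ T, E i ω, q ω ≤ ∑ i ∈ T, ∑ ω with E i ω, q ω := by
  simp only [sum_filter]
  rw [sum_comm]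
  refine sum_le_sum fun ω _ => ?_
  have term_nonneg : ∀ i ∈ T, 0 ≤ if E i ω then q ω else 0 := fun i _ => ite_nonneg (hq ω) le_rfl
  split_ifs with h
  · obtain ⟨i, hi, hE⟩ := h
    simpa [hE] using single_le_sum term_nonneg hi
  · exact sum_nonneg term_nonneg

variable {Ω : Type*} [Fintype Ω] {R : Type*} [CommSemiring R] {π : Ω → R}

lemma sum_prod_filter_forall {ι : Type*} [Fintype ι] [DecidableEq ι] (hπ : ∑ a, π a = 1)
    (J : Finset ι) (P : Ω → Prop) [DecidablePred P] :
    ∑ ω : ι → Ω with ∀ j ∈ J, P (ω j), ∏ j, π (ω j) = (∑ a with P a, π a) ^ #J := by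
  have filter_eq_piFinset : ({ω | ∀ j ∈ J, P (ω j)} : Finset (ι → Ω)) =
      Fintype.piFinset fun j => if j ∈ J then univ.filter P else univ := by
    ext ω
    simp only [mem_filter_univ, Fintype.mem_piFinset]
    refine forall_congr' fun j => ?_
    by_cases hj : j ∈ J <;> simp [hj]
  rw [filter_eq_piFinset, ← prod_univ_sum, ← prod_const]
  simp only [apply_ite (fun B : Finset Ω => ∑ a ∈ B, π a), hπ]
  rw [prod_ite_mem, univ_inter]

lemma sum_prod_filter_removeNth {m : ℕ} (π : Ω → R) (i : Fin (m + 1))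
    (E : Ω → (Fin m → Ω) → Prop) [∀ a, DecidablePred (E a)] :
    ∑ ω : Fin (m + 1) → Ω with E (ω i) (i.removeNth ω), ∏ j, π (ω j) =
      ∑ a, π a * ∑ ω with E a ω, ∏ j, π (ω j) := by
  rw [sum_filter, ← (Fin.insertNthEquiv (fun _ => Ω) i).sum_comp, Fintype.sum_prod_type]
  simp [Fin.insertNthEquiv, Fin.prod_univ_succAbove _ i, mul_sum, sum_filter]

end FiniteWeights

section Sampling

variable {α β : Type*} [Fintype α] [DecidableEq α] {f : Finset α → β} {z : Finset α} {m : ℕ}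

/-- The points lying in at least two sets of the family: without them the sets are disjoint. -/
def doublyCovered {ι : Type*} [Fintype ι] (w : ι → Finset α) : Finset α :=
  {x | 2 ≤ #{j | x ∈ w j}}

lemma mem_doublyCovered_iff_exists {ι : Type*} [Fintype ι] {w : ι → Finset α} {x : α} :
    x ∈ doublyCovered w ↔ ∃ J ∈ powersetCard 2 univ, ∀ j ∈ J, x ∈ w j := by
  rw [doublyCovered, mem_filter_univ, le_card_iff_exists_subset_card]
  simp only [subset_iff, mem_filter_univ, mem_powersetCard_univ]
  exact exists_congr fun J => and_comm

lemma union_doublyCovered_removeNth (w : Fin (m + 1) → Finset α) (i : Fin (m + 1)) :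
    w i ∪ doublyCovered (i.removeNth w) = w i ∪ doublyCovered w := by
  ext x
  simp only [mem_union, doublyCovered, mem_filter_univ]
  refine or_congr_right' fun hx => ?_
  have hcard : #{j | x ∈ w j} = #{j | x ∈ i.removeNth w j} := by
    rw [card_filter, Fin.sum_univ_succAbove _ i, if_neg hx, zero_add, card_filter]
    rfl
  rw [hcard]

lemma card_notMem_sensitiveSets_le_mbs {w : Fin (m + 1) → Finset α}
    (hw : ∀ i, w i ∈ sensitiveSets f z) (hu : doublyCovered w ∉ sensitiveSets f z) :
    #{i | doublyCovered (i.removeNth w) ∉ sensitiveSets f (z ∪ w i)} ≤ mbs f := by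
  refine card_le_mbs (z := z ∪ doublyCovered w) (v := fun i => w i \ doublyCovered w) ?_ ?_
  · intro i hi
    have heq : f (z ∪ w i ∪ doublyCovered w) = f (z ∪ w i) := by
      rw [union_assoc, ← union_doublyCovered_removeNth, ← union_assoc]
      exact notMem_sensitiveSets.1 ((mem_filter_univ i).1 hi)
    rw [mem_sensitiveSets, union_assoc, union_sdiff_self_eq_union, union_comm _ (w i),
      ← union_assoc, heq, notMem_sensitiveSets.1 hu]
    exact mem_sensitiveSets.1 (hw i)
  · intro i _ j _ hij
    refine disjoint_left.2 fun x hxi hxj => (mem_sdiff.1 hxi).2 ?_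
    rw [mem_doublyCovered_iff_exists]
    exact ⟨{i, j}, by simp [card_pair hij], by simp [(mem_sdiff.1 hxi).1, (mem_sdiff.1 hxj).1]⟩

lemma le_mbs_add_card_mem_sensitiveSets {w : Fin (m + 1) → Finset α}
    (hw : ∀ i, w i ∈ sensitiveSets f z) :
    m + 1 ≤ mbs f + #{i | doublyCovered (i.removeNth w) ∈ sensitiveSets f (z ∪ w i)} +
      if doublyCovered w ∈ sensitiveSets f z then m + 1 else 0 := by
  split_ifs with hu
  · omega
  · have hcard := card_filter_add_card_filter_not (s := univ)
      fun i => doublyCovered (i.removeNth w) ∈ sensitiveSets f (z ∪ w i)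
    rw [card_univ, Fintype.card_fin] at hcard
    have := card_notMem_sensitiveSets_le_mbs hw hu
    omega

variable {π : Finset α → ℝ} {b : ℝ}

lemma sum_prod_mem_doublyCovered_le {ι : Type*} [Fintype ι] [DecidableEq ι] (hπ : ∀ w, 0 ≤ π w)
    (hsum : ∑ w, π w = 1) (hmarg : ∀ x, ∑ w with x ∈ w, π w ≤ b) (x : α) :
    ∑ ω : ι → Finset α with x ∈ doublyCovered ω, ∏ j, π (ω j) ≤ (Fintype.card ι * b) ^ 2 / 2 := by
  have marg_nonneg : 0 ≤ ∑ w with x ∈ w, π w := sum_nonneg fun w _ => hπ w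
  calc ∑ ω : ι → Finset α with x ∈ doublyCovered ω, ∏ j, π (ω j)
      ≤ ∑ J ∈ powersetCard 2 univ,
          ∑ ω : ι → Finset α with ∀ j ∈ J, x ∈ ω j, ∏ j, π (ω j) := by
        simp only [mem_doublyCovered_iff_exists]
        exact sum_filter_exists_le (fun ω => prod_nonneg fun j _ => hπ _) _ _
    _ = ∑ J ∈ powersetCard 2 (univ : Finset ι), (∑ w with x ∈ w, π w) ^ 2 :=
        sum_congr rfl fun J hJ => by
          rw [sum_prod_filter_forall hsum J (x ∈ ·), (mem_powersetCard.1 hJ).2]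
    _ = (Fintype.card ι).choose 2 * (∑ w with x ∈ w, π w) ^ 2 := by simp
    _ ≤ Fintype.card ι ^ 2 / 2 * b ^ 2 := by
        gcongr
        · simpa using Nat.choose_le_pow_div (α := ℝ) 2 (Fintype.card ι)
        · exact hmarg x
    _ = (Fintype.card ι * b) ^ 2 / 2 := by ring

lemma sum_prod_doublyCovered_mem_sensitiveSets_le {ι : Type*} [Fintype ι] [DecidableEq ι] {c : ℝ}
    (hπ : ∀ w, 0 ≤ π w) (hsum : ∑ w, π w = 1) (hmarg : ∀ x, ∑ w with x ∈ w, π w ≤ b)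
    (hc : 0 < c) (hcard : (Fintype.card ι * b) ^ 2 / 2 ≤ c) :
    ∑ ω : ι → Finset α with doublyCovered ω ∈ sensitiveSets f z, ∏ j, π (ω j) ≤ fmbs f * c :=
  sum_mem_sensitiveSets_le_fmbs_mul (fun _ _ => prod_nonneg fun _ _ => hπ _) hc fun x =>
    (sum_prod_mem_doublyCovered_le hπ hsum hmarg x).trans hcard

lemma sum_prod_doublyCovered_removeNth_mem_sensitiveSets_le {c : ℝ} (hπ : ∀ w, 0 ≤ π w)
    (hsum : ∑ w, π w = 1) (hmarg : ∀ x, ∑ w with x ∈ w, π w ≤ b) (hc : 0 < c)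
    (hcard : (m * b) ^ 2 / 2 ≤ c) (i : Fin (m + 1)) :
    ∑ ω : Fin (m + 1) → Finset α with
      doublyCovered (i.removeNth ω) ∈ sensitiveSets f (z ∪ ω i), ∏ j, π (ω j) ≤ fmbs f * c := by
  rw [sum_prod_filter_removeNth π i fun a ω => doublyCovered ω ∈ sensitiveSets f (z ∪ a)]
  calc ∑ a, π a * ∑ ω : Fin m → Finset α with
          doublyCovered ω ∈ sensitiveSets f (z ∪ a), ∏ j, π (ω j)
      ≤ ∑ a, π a * (fmbs f * c) := by
        gcongr with a
        · exact hπ a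
        · exact sum_prod_doublyCovered_mem_sensitiveSets_le hπ hsum hmarg hc (by simpa using hcard)
    _ = fmbs f * c := by rw [← sum_mul, hsum, one_mul]

lemma prod_mul_le_mbs_add_sum_ite (hπ : ∀ w, 0 ≤ π w)
    (hsupp : ∀ w ∉ sensitiveSets f z, π w = 0) (ω : Fin (m + 1) → Finset α) :
    (∏ j, π (ω j)) * (m + 1) ≤ (∏ j, π (ω j)) * mbs f +
      ∑ i, (if doublyCovered (i.removeNth ω) ∈ sensitiveSets f (z ∪ ω i) then ∏ j, π (ω j)
        else 0) +
      (m + 1) * (if doublyCovered ω ∈ sensitiveSets f z then ∏ j, π (ω j) else 0) := by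
  by_cases hω : ∀ i, ω i ∈ sensitiveSets f z
  · have hcount : ((m + 1 : ℕ) : ℝ) ≤ _ := Nat.cast_le.2 (le_mbs_add_card_mem_sensitiveSets hω)
    push_cast at hcount
    rw [← sum_filter, sum_const, nsmul_eq_mul]
    refine (mul_le_mul_of_nonneg_left hcount (prod_nonneg fun j _ => hπ (ω j))).trans_eq ?_
    split_ifs <;> ring
  · obtain ⟨i, hi⟩ := not_forall.1 hω
    have hzero : ∏ j, π (ω j) = 0 := prod_eq_zero (mem_univ i) (hsupp _ hi)
    simp [hzero]

/-- The expectation of `le_mbs_add_card_mem_sensitiveSets` over `m + 1` independent samples. -/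
lemma le_mbs_add_mul_fmbs (hπ : ∀ w, 0 ≤ π w) (hsum : ∑ w, π w = 1)
    (hsupp : ∀ w ∉ sensitiveSets f z, π w = 0) (hb : 0 < b)
    (hmarg : ∀ x, ∑ w with x ∈ w, π w ≤ b) (m : ℕ) :
    (m + 1 : ℝ) ≤ mbs f + (m + 1) * (fmbs f * ((m + 1) * b) ^ 2) := by
  let μ : (Fin (m + 1) → Finset α) → ℝ := fun ω => ∏ j, π (ω j)
  have sum_μ : ∑ ω, μ ω = 1 := by rw [← Fintype.sum_pow, hsum, one_pow]
  let c : ℝ := ((m + 1) * b) ^ 2 / 2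
  have hc : 0 < c := by positivity
  calc (m + 1 : ℝ) = ∑ ω, μ ω * (m + 1) := by rw [← sum_mul, sum_μ, one_mul]
    _ ≤ mbs f + ∑ i, ∑ ω with
          doublyCovered (i.removeNth ω) ∈ sensitiveSets f (z ∪ ω i), μ ω +
        (m + 1) * ∑ ω with doublyCovered ω ∈ sensitiveSets f z, μ ω := by
        refine (sum_le_sum fun ω _ => prod_mul_le_mbs_add_sum_ite hπ hsupp ω).trans_eq ?_
        rw [sum_add_distrib, sum_add_distrib, ← sum_mul, sum_μ, one_mul, sum_comm, ← mul_sum]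
        simp only [sum_filter, μ]
    _ ≤ mbs f + ∑ _i : Fin (m + 1), fmbs f * c + (m + 1) * (fmbs f * c) := by
        gcongr with i
        · refine sum_prod_doublyCovered_removeNth_mem_sensitiveSets_le hπ hsum hmarg hc ?_ i
          dsimp only [c]
          gcongr
          linarith
        · exact sum_prod_doublyCovered_mem_sensitiveSets_le hπ hsum hmarg hc (by simp [c])
    _ = mbs f + (m + 1) * (fmbs f * ((m + 1) * b) ^ 2) := by
        simp only [sum_const, card_univ, Fintype.card_fin, nsmul_eq_mul, c]
        push_cast
        ring

lemma IsFractionalPacking.sq_sum_sensitiveSets_le {p : Finset α → ℝ} (hp : IsFractionalPacking p)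
    (hpos : 0 < ∑ w ∈ sensitiveSets f z, p w) :
    (∑ w ∈ sensitiveSets f z, p w) ^ 2 ≤ 2 * (2 * mbs f + 1) ^ 2 * fmbs f := by
  set v := ∑ w ∈ sensitiveSets f z, p w with hv
  let π : Finset α → ℝ := fun w => if w ∈ sensitiveSets f z then p w / v else 0
  have hπ (w : Finset α) : 0 ≤ π w := ite_nonneg (div_nonneg (hp.nonneg w) hpos.le) le_rfl
  have hsum : ∑ w, π w = 1 := by
    simp only [π, sum_ite_mem, univ_inter]
    rw [← sum_div, ← hv, div_self hpos.ne']
  have hmarg (x : α) : ∑ w with x ∈ w, π w ≤ 1 / v :=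
    calc ∑ w with x ∈ w, π w ≤ ∑ w with x ∈ w, p w / v := by
          refine sum_le_sum fun w _ => ?_
          have := div_nonneg (hp.nonneg w) hpos.le
          dsimp only [π]
          split_ifs <;> simp [this]
      _ ≤ 1 / v := by
          rw [← sum_div]
          gcongr
          exact hp.sum_mem_le_one x
  have hsample := le_mbs_add_mul_fmbs hπ hsum (fun w hw => if_neg hw) (one_div_pos.2 hpos)
    hmarg (2 * mbs f)
  push_cast at hsample
  set M : ℝ := 2 * mbs f + 1
  have hMpos : 0 < M := by positivity
  have hhalf : M * (1 / 2) ≤ M * (fmbs f * (M * (1 / v)) ^ 2) := by linarith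
  rw [mul_le_mul_iff_right₀ hMpos, mul_one_div, div_pow, mul_div_assoc',
    div_le_div_iff₀ two_pos (by positivity)] at hhalf
  linarith

lemma fmbs_le_mbs_sq (f : Finset α → β) : fmbs f ≤ 2 * (2 * mbs f + 1) ^ 2 := by
  have fmbs_le_sqrt : fmbs f ≤ √(2 * (2 * mbs f + 1) ^ 2 * fmbs f) := by
    refine Real.sSup_le ?_ (Real.sqrt_nonneg _)
    rintro v ⟨z, p, hp, rfl⟩
    rcases le_or_gt (∑ w ∈ sensitiveSets f z, p w) 0 with hnonpos | hpos
    · exact hnonpos.trans (Real.sqrt_nonneg _)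
    · exact Real.le_sqrt_of_sq_le (hp.sq_sum_sensitiveSets_le hpos)
  rcases (fmbs_nonneg f).eq_or_lt with hzero | hpos
  · rw [← hzero]
    positivity
  · rw [Real.le_sqrt hpos.le (by positivity), sq] at fmbs_le_sqrt
    exact le_of_mul_le_mul_right fmbs_le_sqrt hpos

end Sampling

section HittingSet

variable {α β : Type*} [DecidableEq α] {f : Finset α → β} {z : Finset α}

lemma exists_hitting_set_of_card_lt_exp {ρ : ℝ} (t : ℕ) (M : Finset (Finset α))
    (hpop : ∀ N ⊆ M, N.Nonempty → ∃ x, ρ * #N ≤ #{w ∈ N | x ∈ w})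
    (hM : #M < Real.exp (ρ * t)) : ∃ H : Finset α, #H ≤ t ∧ ∀ w ∈ M, (H ∩ w).Nonempty := by
  induction t generalizing M with
  | zero =>
    have hM' : #M < 1 := by simpa using hM
    exact ⟨∅, by simp [card_eq_zero.1 (Nat.lt_one_iff.1 hM')]⟩
  | succ t ih =>
    rcases M.eq_empty_or_nonempty with rfl | hne
    · exact ⟨∅, by simp⟩
    obtain ⟨x, hx⟩ := hpop M subset_rfl hne
    have hcard : (#{w ∈ M | x ∈ w} + #{w ∈ M | x ∉ w} : ℝ) = #M := by
      exact_mod_cast card_filter_add_card_filter_not (s := M) (x ∈ ·)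
    have hrest : #{w ∈ M | x ∉ w} < Real.exp (ρ * t) :=
      calc (#{w ∈ M | x ∉ w} : ℝ) ≤ (1 - ρ) * #M := by linarith
        _ ≤ Real.exp (-ρ) * #M := by gcongr; exact Real.one_sub_le_exp_neg ρ
        _ < Real.exp (-ρ) * Real.exp (ρ * (t + 1 : ℕ)) := by gcongr
        _ = Real.exp (ρ * t) := by rw [← Real.exp_add]; push_cast; ring_nf
    obtain ⟨H, hH, hhit⟩ := ih {w ∈ M | x ∉ w} (fun N hN => hpop N (hN.trans (filter_subset _ _)))
      hrest
    refine ⟨insert x H, (card_insert_le _ _).trans (Nat.add_le_add_right hH 1), fun w hw => ?_⟩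
    by_cases hxw : x ∈ w
    · exact ⟨x, mem_inter.2 ⟨mem_insert_self x H, hxw⟩⟩
    · exact (hhit w (mem_filter.2 ⟨hw, hxw⟩)).mono (inter_subset_inter_right (subset_insert x H))

variable [Fintype α]

lemma exists_card_le_fmbs_mul_card {N : Finset (Finset α)} (hN : N ⊆ sensitiveSets f z)
    (hne : N.Nonempty) : ∃ x, #N ≤ fmbs f * #{w ∈ N | x ∈ w} := by
  obtain ⟨w₀, hw₀⟩ := hne
  obtain ⟨x₀, hx₀⟩ := nonempty_of_mem_sensitiveSets (hN hw₀)
  obtain ⟨x, -, hmax⟩ := exists_max_image univ (fun x => #{w ∈ N | x ∈ w}) ⟨x₀, mem_univ x₀⟩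
  have hpos : 0 < #{w ∈ N | x ∈ w} :=
    (card_pos.2 ⟨w₀, mem_filter.2 ⟨hw₀, hx₀⟩⟩).trans_le (hmax x₀ (mem_univ x₀))
  have hle := sum_mem_sensitiveSets_le_fmbs_mul (f := f) (z := z) (S := N) (q := fun _ => 1)
    (U := fun w => w) (c := #{w ∈ N | x ∈ w}) (fun _ _ => zero_le_one) (by exact_mod_cast hpos)
    fun y => by simpa using hmax y (mem_univ y)
  refine ⟨x, ?_⟩
  rwa [filter_true_of_mem fun w hw => hN hw, sum_const, nsmul_eq_mul, mul_one] at hle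

end HittingSet

section SparseFunctions

variable {n d : ℕ} {f : Finset (Fin n) → ℝ} {z : Finset (Fin n)}

lemma exists_subset_mem_sensitiveSets_coeff_ne_zero {w : Finset (Fin n)}
    (hw : w ∈ sensitiveSets f z) :
    ∃ v ⊆ w, v ∈ sensitiveSets f z ∧ coeff (f ∘ (z ∪ ·)) v ≠ 0 := by
  obtain ⟨v, hvw, hv⟩ := (sensitiveSets f z).exists_le_minimal hw
  refine ⟨v, hvw, hv.prop, ?_⟩
  have hconst : ∀ t ⊂ v, (f ∘ (z ∪ ·)) t = (f ∘ (z ∪ ·)) ∅ := fun t ht => by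
    simpa using notMem_sensitiveSets.1 (hv.not_prop_of_lt ht)
  rw [coeff_eq_sub_of_forall_ssubset (nonempty_of_mem_sensitiveSets hv.prop) hconst]
  simpa [sub_eq_zero] using mem_sensitiveSets.1 hv.prop

lemma fmbs_le_of_sparsity_le (hd : 1 ≤ d) (hf : ∀ x, f x = 0 ∨ f x = 1)
    (hsp : sparsity f ≤ 2 ^ d) : fmbs f ≤ 2178 * d ^ 4 := by
  have hmbs : (mbs f : ℝ) ≤ 16 * d ^ 2 := by exact_mod_cast mbs_le_of_sparsity_le hd hf hsp
  have hd' : (1 : ℝ) ≤ d ^ 2 := one_le_pow₀ (by exact_mod_cast hd)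
  calc fmbs f ≤ 2 * (2 * mbs f + 1) ^ 2 := fmbs_le_mbs_sq f
    _ ≤ 2 * (33 * d ^ 2) ^ 2 := by gcongr; linarith
    _ = 2178 * d ^ 4 := by ring

lemma exists_hitting_set_of_sparsity_le (hd : 1 ≤ d) (hf : ∀ x, f x = 0 ∨ f x = 1)
    (hsp : sparsity f ≤ 2 ^ d) (z : Finset (Fin n)) :
    ∃ H : Finset (Fin n), #H ≤ 2178 * d ^ 5 ∧ ∀ w ∈ sensitiveSets f z, (H ∩ w).Nonempty := by
  classical
  have : (0 : ℝ) < d := by exact_mod_cast hd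
  let M : Finset (Finset (Fin n)) := {w ∈ sensitiveSets f z | coeff (f ∘ (z ∪ ·)) w ≠ 0}
  have hpop : ∀ N ⊆ M, N.Nonempty →
      ∃ x, (2178 * d ^ 4 : ℝ)⁻¹ * #N ≤ #{w ∈ N | x ∈ w} := fun N hN hne => by
    obtain ⟨x, hx⟩ := exists_card_le_fmbs_mul_card (hN.trans (filter_subset _ _)) hne
    refine ⟨x, (inv_mul_le_iff₀ (by positivity)).2 (hx.trans ?_)⟩
    gcongr
    exact fmbs_le_of_sparsity_le hd hf hsp
  have hM : (#M : ℝ) < Real.exp ((2178 * d ^ 4 : ℝ)⁻¹ * (2178 * d ^ 5 : ℕ)) := by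
    have hcard : #M ≤ 2 ^ d :=
      calc #M ≤ sparsity (f ∘ (z ∪ ·)) := by
            rw [sparsity_eq_card]
            exact card_le_card (filter_subset_filter _ (subset_univ _))
        _ ≤ sparsity f := sparsity_comp_le f (union_inter_distrib_left z)
        _ ≤ 2 ^ d := hsp
    calc (#M : ℝ) ≤ 2 ^ d := by exact_mod_cast hcard
      _ < Real.exp 1 ^ d := by
          gcongr
          linarith [Real.exp_one_gt_d9]
      _ = _ := by
          rw [← Real.exp_nat_mul]
          congr 1
          push_cast
          field_simp
  obtain ⟨H, hcard, hH⟩ := exists_hitting_set_of_card_lt_exp _ M hpop hM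
  refine ⟨H, hcard, fun w hw => ?_⟩
  obtain ⟨v, hvw, hv, hcoeff⟩ := exists_subset_mem_sensitiveSets_coeff_ne_zero hw
  exact (hH v (mem_filter.2 ⟨hv, hcoeff⟩)).mono (inter_subset_inter_left hvw)

end SparseFunctions

/-- Log-rank theorem ingredient: `HSC(f) = O((log r)^5)` for boolean `f` of sparsity `r ≥ 2`:
for every `z`, the family `W(f,z)` has a hitting set of size `≤ C·(log₂ r)^5`. -/
theorem stmt1 :
    ∃ C : ℝ, 0 < C ∧
      ∀ (n : ℕ) (f : Finset (Fin n) → ℝ),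
        (∀ x, f x = 0 ∨ f x = 1) →
        2 ≤ sparsity f →
        ∀ z : Finset (Fin n),
          ∃ H : Finset (Fin n),
            (∀ w ∈ W f z, (H ∩ w).Nonempty) ∧
            (H.card : ℝ) ≤ C * (Real.logb 2 (sparsity f)) ^ 5 := by
  refine ⟨2178 * 2 ^ 5, by norm_num, fun n f hf hr z => ?_⟩
  have one_le_logb : 1 ≤ Real.logb 2 (sparsity f) := by
    rw [Real.le_logb_iff_rpow_le one_lt_two (by positivity), Real.rpow_one]
    exact_mod_cast hr
  let d : ℕ := ⌈Real.logb 2 (sparsity f)⌉₊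
  have hd : 1 ≤ d := Nat.one_le_ceil_iff.2 (by linarith)
  have hd_le : (d : ℝ) ≤ 2 * Real.logb 2 (sparsity f) := by
    linarith [Nat.ceil_lt_add_one (zero_le_one.trans one_le_logb)]
  have hsp : sparsity f ≤ 2 ^ d := by
    have : (sparsity f : ℝ) ≤ 2 ^ (d : ℝ) :=
      (Real.logb_le_iff_le_rpow one_lt_two (by positivity)).1 (Nat.le_ceil _)
    exact_mod_cast this
  obtain ⟨H, hcard, hH⟩ := exists_hitting_set_of_sparsity_le hd hf hsp z
  refine ⟨H, fun w hw => hH w (mem_sensitiveSets.2 hw.2), ?_⟩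
  calc (#H : ℝ) ≤ 2178 * d ^ 5 := by exact_mod_cast hcard
    _ ≤ 2178 * (2 * Real.logb 2 (sparsity f)) ^ 5 := by gcongr
    _ = 2178 * 2 ^ 5 * Real.logb 2 (sparsity f) ^ 5 := by rw [mul_pow, mul_assoc]
end
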